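/- Let p be a prime and n ≥ 1. Let M be an analytic submanifold of ℚ_p^n, let v ≥ n+1, and suppose that w(y₀) ≤ v for some y₀ ∈ M. Then for almost every point y in a neighbourhood of y₀ in M (with respect to the smooth measure class on M) one has w(y) ≤ v. -/

import Mathlib

open MeasureTheory Metric
open scoped ENNReal NNReal

namespace PadicDioph

variable (p : ℕ) [Fact p.Prime]

noncomputable instance : MeasurableSpace ℚ_[p] := borel _
instance : BorelSpace ℚ_[p] := ⟨rfl⟩

/-- Membership in `ℤ[1/p]`, viewed inside `ℚ`. -/
def IsZInvP (q : ℚ) : Prop := ∃ (z : ℤ) (k : ℕ), q = (z : ℚ) / (p : ℚ) ^ k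

/-- Sup norm (max of archimedean absolute values) of a finite tuple of rationals. -/
noncomputable def supNormR {m : ℕ} (q : Fin m → ℚ) : ℝ := ⨆ i, |(q i : ℝ)|

/-- Sup of the `p`-adic absolute values of a finite tuple of rationals. -/
noncomputable def supNormP {m : ℕ} (q : Fin m → ℚ) : ℝ := ⨆ i, ‖((q i : ℚ_[p]))‖

/-- Sup norm of an integer tuple together with an extra integer coordinate. -/
noncomputable def supNormZ {n : ℕ} (q0 : ℤ) (q : Fin n → ℤ) : ℝ :=
  max |(q0 : ℝ)| (⨆ i, |((q i : ℤ) : ℝ)|)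

/-- The classical Diophantine exponent `w(y)` of `y ∈ ℚ_p^n`: the supremum of all `v > 0`
such that `|q₀ + q·y|_p ≤ ‖(q₀,q)‖_∞^{-v}` has infinitely many integer solutions. -/
noncomputable def wExp {n : ℕ} (y : Fin n → ℚ_[p]) : ℝ≥0∞ :=
  ⨆ (v : ℝ) (_ : 0 < v ∧
    {qq : ℤ × (Fin n → ℤ) |
      ‖((qq.1 : ℚ_[p]) + ∑ i, (qq.2 i : ℚ_[p]) * y i)‖ ≤
        (supNormZ qq.1 qq.2) ^ (-v)}.Infinite), ENNReal.ofReal v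

/-- `y` is very well approximable if `w(y) > n + 1`. -/
def IsVWA {n : ℕ} (y : Fin n → ℚ_[p]) : Prop :=
  ENNReal.ofReal ((n : ℝ) + 1) < wExp p y

/-- The defining condition of the exponent `w_p`: there are solutions
`q̃ = (q₀, q) ∈ ℤ[1/p]^{n+1}` of `|q·y + q₀|_p < (‖q‖_p ‖q̃‖_∞)^{-v} ‖q̃‖_∞^{-1}`
with `‖q‖_p ‖q̃‖_∞` arbitrarily large. -/
def WpCond {n : ℕ} (y : Fin n → ℚ_[p]) (v : ℝ) : Prop :=
  ∀ T : ℝ, ∃ (q0 : ℚ) (q : Fin n → ℚ),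
    IsZInvP p q0 ∧ (∀ i, IsZInvP p (q i)) ∧
    T < supNormP p q * supNormR (Fin.cons q0 q) ∧
    ‖(∑ i, (q i : ℚ_[p]) * y i) + (q0 : ℚ_[p])‖ <
      (supNormP p q * supNormR (Fin.cons q0 q)) ^ (-v) * (supNormR (Fin.cons q0 q))⁻¹

/-- The exponent `w_p(y)`. -/
noncomputable def wpExp {n : ℕ} (y : Fin n → ℚ_[p]) : ℝ≥0∞ :=
  ⨆ (v : ℝ) (_ : 0 < v ∧ WpCond p y v), ENNReal.ofReal v

/-- `Π_+` of a tuple of rationals: the product of `|q_i|_∞` over the nonzero coordinates. -/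
noncomputable def piPlusQ {m : ℕ} (q : Fin m → ℚ) : ℝ :=
  ∏ i, (if q i = 0 then 1 else |(q i : ℝ)|)

/-- `Π_+` of `(q₀, q)` with integer coordinates. -/
noncomputable def piPlusZ {n : ℕ} (q0 : ℤ) (q : Fin n → ℤ) : ℝ :=
  (if q0 = 0 then 1 else |(q0 : ℝ)|) * ∏ i, (if q i = 0 then 1 else |((q i : ℤ) : ℝ)|)

/-- `y ∈ ℚ_p^n` is very well multiplicatively approximable. -/
def IsVWMA {n : ℕ} (y : Fin n → ℚ_[p]) : Prop :=
  ∃ ε : ℝ, 0 < ε ∧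
    {qq : ℤ × (Fin n → ℤ) |
      ‖((qq.1 : ℚ_[p]) + ∑ i, (qq.2 i : ℚ_[p]) * y i)‖ ≤
        (piPlusZ qq.1 qq.2) ^ (-(1 + ε))}.Infinite

/-- A measure on `ℚ_p^n` is strongly extremal if almost every point is not VWMA. -/
def StronglyExtremal {n : ℕ} (μ : Measure (Fin n → ℚ_[p])) : Prop :=
  ∀ᵐ y ∂μ, ¬ IsVWMA p y

/-- `δ(g_t u_y D^{n+1})` for the one-parameter flow: `g_t` has `p`-adic component
`diag(p^{-t},1,…,1)` and archimedean component `p^{-t/(n+1)}·Id`. -/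
noncomputable def deltaOne {n : ℕ} (y : Fin n → ℚ_[p]) (t : ℕ) : ℝ :=
  sInf { c : ℝ | ∃ qt : Fin (n + 1) → ℚ, (∀ i, IsZInvP p (qt i)) ∧ qt ≠ 0 ∧
    c = ((p : ℝ) ^ (-(t : ℝ) / ((n : ℝ) + 1)) * supNormR qt) *
        max (‖(((p : ℚ_[p]) ^ t)⁻¹ * ((qt 0 : ℚ_[p]) + ∑ i : Fin n, (qt i.succ : ℚ_[p]) * y i))‖)
            (⨆ i : Fin n, ‖((qt i.succ : ℚ_[p]))‖) }

/-- The exponent `γ(y)`. -/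
noncomputable def gammaExp {n : ℕ} (y : Fin n → ℚ_[p]) : ℝ :=
  sSup {c : ℝ | 0 ≤ c ∧ ∀ N : ℕ, ∃ t : ℕ, N ≤ t ∧
    deltaOne p y t ≤ (p : ℝ) ^ (-(c * (t : ℝ)))}

/-- `δ(g_t u_y D^{n+1})` for the multiparameter flow: for `t = (t₀,…,t_n)` with
`T = Σ tᵢ`, the `p`-adic component of `g_t` is `diag(p^{-T},1,…,1)` and the archimedean
component is `diag(p^{-t₀},…,p^{-t_n})`. -/
noncomputable def deltaMulti {n : ℕ} (y : Fin n → ℚ_[p]) (t : Fin (n + 1) → ℕ) : ℝ :=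
  sInf { c : ℝ | ∃ qt : Fin (n + 1) → ℚ, (∀ i, IsZInvP p (qt i)) ∧ qt ≠ 0 ∧
    c = (⨆ i, (p : ℝ) ^ (-((t i : ℝ))) * |(qt i : ℝ)|) *
        max (‖(((p : ℚ_[p]) ^ (∑ i, t i))⁻¹ *
              ((qt 0 : ℚ_[p]) + ∑ i : Fin n, (qt i.succ : ℚ_[p]) * y i))‖)
            (⨆ i : Fin n, ‖((qt i.succ : ℚ_[p]))‖) }

/-- The support of a measure on a metric space. -/
def measSupp {X : Type*} [MetricSpace X] [MeasurableSpace X] (μ : Measure X) : Set X :=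
  {x | ∀ r : ℝ, 0 < r → 0 < μ (ball x r)}

/-- `‖f‖_{μ,B}`. -/
noncomputable def muSupNorm {X : Type*} [MetricSpace X] [MeasurableSpace X]
    (μ : Measure X) (B : Set X) (f : X → ℚ_[p]) : ℝ :=
  sSup {c : ℝ | 0 < μ {x ∈ B | c < ‖f x‖}}

/-- `f` is `(C, α)`-good on `V` with respect to `μ`. -/
def IsGoodOn {X : Type*} [MetricSpace X] [MeasurableSpace X] (μ : Measure X)
    (C a : ℝ) (V : Set X) (f : X → ℚ_[p]) : Prop :=
  ∀ (x₀ : X) (r : ℝ), 0 < r → x₀ ∈ measSupp μ → ball x₀ r ⊆ V →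
    ∀ ε : ℝ, 0 < ε →
      μ {x ∈ ball x₀ r | ‖f x‖ < ε} ≤
        ENNReal.ofReal (C * (ε / muSupNorm p μ (ball x₀ r) f) ^ a) * μ (ball x₀ r)

/-- A metric space is Besicovitch: any family of balls whose centers exhaust a bounded
set `A` admits a countable subfamily covering `A` with multiplicity at most `N`. -/
def IsBesicovitch (X : Type*) [MetricSpace X] : Prop :=
  ∃ N : ℕ, ∀ (A : Set X), Bornology.IsBounded A →
    ∀ F : Set (X × ℝ), (∀ b ∈ F, 0 < b.2) → (∀ x ∈ A, ∃ r : ℝ, (x, r) ∈ F) →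
      ∃ S ⊆ F, S.Countable ∧ (∀ x ∈ A, ∃ b ∈ S, x ∈ ball b.1 b.2) ∧
        ∀ x : X, {b ∈ S | x ∈ ball b.1 b.2}.encard ≤ N

/-- `μ` is `D`-Federer on the open set `U`. -/
def IsDFedererOn {X : Type*} [MetricSpace X] [MeasurableSpace X]
    (μ : Measure X) (D : ℝ) (U : Set X) : Prop :=
  ∀ x ∈ measSupp μ, ∀ r : ℝ, 0 < r → ball x (3 * r) ⊆ U →
    μ (ball x (3 * r)) ≤ ENNReal.ofReal D * μ (ball x r)

/-- `μ` is Federer. -/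
def IsFederer {X : Type*} [MetricSpace X] [MeasurableSpace X] (μ : Measure X) : Prop :=
  ∀ᵐ x ∂μ, ∃ U : Set X, IsOpen U ∧ x ∈ U ∧ 0 < μ U ∧ ∃ D : ℝ, 0 < D ∧ IsDFedererOn μ D U

/-- The pair `(f, μ)` is good: `μ`-a.e. point has a neighbourhood `V` and `C, α > 0`
such that every affine combination `c₀ + Σ cᵢ fᵢ` is `(C, α)`-good on `V` w.r.t. `μ`. -/
def GoodPair {X : Type*} [MetricSpace X] [MeasurableSpace X] {n : ℕ}
    (f : X → (Fin n → ℚ_[p])) (μ : Measure X) : Prop :=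
  ∀ᵐ x ∂μ, ∃ V : Set X, IsOpen V ∧ x ∈ V ∧ ∃ C a : ℝ, 0 < C ∧ 0 < a ∧
    ∀ c0 : ℚ_[p], ∀ c : Fin n → ℚ_[p],
      IsGoodOn p μ C a V (fun x => c0 + ∑ i, c i * f x i)

/-- `(f, μ)` is nonplanar in the affine subspace `L`. -/
def NonplanarIn {X : Type*} [MetricSpace X] [MeasurableSpace X] {n : ℕ}
    (f : X → (Fin n → ℚ_[p])) (μ : Measure X)
    (L : AffineSubspace ℚ_[p] (Fin n → ℚ_[p])) : Prop :=
  ∀ B : Set X, IsOpen B → B.Nonempty → 0 < μ B →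
    affineSpan ℚ_[p] (f '' (B ∩ measSupp μ)) = L

/-- `f` is nondegenerate in the affine subspace `L` at `x`: `f` takes values in `L` and the
span of the partial derivatives of `f` at `x` up to some order is the linear part of `L`. -/
def NondegenerateAt {d n : ℕ} (f : (Fin d → ℚ_[p]) → (Fin n → ℚ_[p]))
    (L : AffineSubspace ℚ_[p] (Fin n → ℚ_[p])) (x : Fin d → ℚ_[p]) : Prop :=
  (∀ u, f u ∈ L) ∧ ∃ m : ℕ,
    Submodule.span ℚ_[p]
      {v : Fin n → ℚ_[p] | ∃ j : ℕ, j ≤ m ∧ 1 ≤ j ∧ ∃ vs : Fin j → (Fin d → ℚ_[p]),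
        v = iteratedFDeriv ℚ_[p] j f x vs} = L.direction

/-- An analytic chart of the `d`-dimensional submanifold `M` of `ℚ_p^n`: an analytic map
`f` on an open set `U`, injective on `U`, immersive, a homeomorphism onto its image, whose
image is a relatively open subset of `M`. -/
def IsChart (d n : ℕ) (M : Set (Fin n → ℚ_[p]))
    (U : Set (Fin d → ℚ_[p])) (f : (Fin d → ℚ_[p]) → (Fin n → ℚ_[p])) : Prop :=
  IsOpen U ∧ AnalyticOnNhd ℚ_[p] f U ∧ Set.InjOn f U ∧
  (∀ x ∈ U, Function.Injective (fderiv ℚ_[p] f x)) ∧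
  (∀ x ∈ U, ∀ V : Set (Fin d → ℚ_[p]), IsOpen V → x ∈ V →
      ∃ W : Set (Fin n → ℚ_[p]), IsOpen W ∧ f x ∈ W ∧ W ∩ f '' U ⊆ f '' (V ∩ U)) ∧
  ∃ W : Set (Fin n → ℚ_[p]), IsOpen W ∧ M ∩ W = f '' U

/-- `M` is a `d`-dimensional analytic submanifold of `ℚ_p^n`. -/
def IsAnalyticSubmanifold (d n : ℕ) (M : Set (Fin n → ℚ_[p])) : Prop :=
  M.Nonempty ∧ ∀ y ∈ M, ∃ (U : Set (Fin d → ℚ_[p])) (f : (Fin d → ℚ_[p]) → (Fin n → ℚ_[p])),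
    IsChart p d n M U f ∧ y ∈ f '' U



/-- sup of absolute values of maximal minors -/
def cov {j m : ℕ} (b : Fin j → Fin m → ℤ) : ℕ :=
  Finset.univ.sup fun I : Fin j → Fin m => (Matrix.det (Matrix.of fun a c => b a (I c))).natAbs

theorem le_cov {j m : ℕ} (b : Fin j → Fin m → ℤ) (I : Fin j → Fin m) :
    (Matrix.det (Matrix.of fun a c => b a (I c))).natAbs ≤ cov b :=
  Finset.le_sup (f := fun I : Fin j → Fin m =>
    (Matrix.det (Matrix.of fun a c => b a (I c))).natAbs) (Finset.mem_univ I)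

theorem cov_zero {m : ℕ} (b : Fin 0 → Fin m → ℤ) : cov b = 1 := by
  simp [cov]

theorem cov_exists {j m : ℕ} (b : Fin j → Fin m → ℤ) (h : 0 < cov b) :
    ∃ I : Fin j → Fin m, (Matrix.det (Matrix.of fun a c => b a (I c))).natAbs = cov b := by
  have hne : (Finset.univ : Finset (Fin j → Fin m)).Nonempty := by
    by_contra hne
    rw [Finset.not_nonempty_iff_eq_empty] at hne
    rw [cov, hne] at h
    simp at h
  obtain ⟨I, -, hI⟩ := Finset.exists_mem_eq_sup _ hne (fun I : Fin j → Fin m =>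
    (Matrix.det (Matrix.of fun a c => b a (I c))).natAbs)
  exact ⟨I, hI.symm⟩

theorem cov_cons {j m : ℕ} (b : Fin j → Fin m → ℤ) (w : Fin m → ℤ) :
    (cov (Fin.cons w b : Fin (j+1) → Fin m → ℤ) : ℝ) ≤ (j + 1) * ‖w‖ * cov b := by
  rcases Nat.eq_zero_or_pos (cov (Fin.cons w b : Fin (j+1) → Fin m → ℤ)) with h | h
  · rw [h]; simp only [Nat.cast_zero]; positivity
  obtain ⟨I, hI⟩ := cov_exists _ h
  rw [← hI, Matrix.det_succ_row_zero, Nat.cast_natAbs, Int.cast_abs]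
  simp only [Int.cast_sum, Int.cast_mul, Int.cast_pow, Int.cast_neg, Int.cast_one]
  refine (Finset.abs_sum_le_sum_abs _ _).trans ?_
  have : ∀ i ∈ (Finset.univ : Finset (Fin (j+1))), |(-1 : ℝ) ^ (i : ℕ) *
      (((Matrix.of fun a c => (Fin.cons w b : Fin (j+1) → Fin m → ℤ) a (I c)) 0 i : ℤ) : ℝ) *
      ((((Matrix.of fun a c => (Fin.cons w b : Fin (j+1) → Fin m → ℤ) a (I c)).submatrix
        Fin.succ i.succAbove).det : ℤ) : ℝ)| ≤ ‖w‖ * cov b := by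
    intro i _
    rw [abs_mul, abs_mul, abs_pow, abs_neg, abs_one, one_pow, one_mul]
    refine mul_le_mul ?_ ?_ (abs_nonneg _) (norm_nonneg _)
    · have := norm_le_pi_norm w (I i)
      simpa [Int.norm_eq_abs] using this
    · have := le_cov b (I ∘ i.succAbove)
      have h2 : ((Matrix.of fun a c => (Fin.cons w b : Fin (j+1) → Fin m → ℤ) a (I c)).submatrix
        Fin.succ i.succAbove) = Matrix.of fun a c => b a ((I ∘ i.succAbove) c) := by
        ext a c; simp
      rw [h2, ← Int.cast_abs, ← Nat.cast_natAbs]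
      exact_mod_cast this
  refine (Finset.sum_le_sum this).trans ?_
  simp [mul_assoc]

theorem cov_mul {j m : ℕ} (b b' : Fin j → Fin m → ℤ) (A : Matrix (Fin j) (Fin j) ℤ)
    (h : ∀ a k, b' a k = ∑ i, A a i * b i k) : cov b' = A.det.natAbs * cov b := by
  rw [cov, cov, Finset.apply_sup_eq_sup_comp (fun x : ℕ => A.det.natAbs * x)
    (fun x y => by simp) (by simp)]
  congr 1
  ext I
  simp only [Function.comp]
  rw [← Int.natAbs_mul, ← Matrix.det_mul]
  congr 2
  ext a c
  simp [Matrix.mul_apply, h]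

/-- cast of an integer vector -/
def zq {m : ℕ} (q : Fin m → ℤ) : Fin m → ℚ := fun i => (q i : ℚ)

theorem li_of_cov_pos {j m : ℕ} (b : Fin j → Fin m → ℤ) (h : 0 < cov b) :
    LinearIndependent ℚ (fun i => zq (b i)) := by
  obtain ⟨I, hI⟩ := cov_exists b h
  have hd : (Matrix.of fun a c => (b a (I c) : ℚ)).det ≠ 0 := by
    have : (Matrix.of fun a c => (b a (I c) : ℚ)) =
      (Int.castRingHom ℚ).mapMatrix (Matrix.of fun a c => b a (I c)) := by ext; simp
    rw [this, ← RingHom.map_det]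
    simp only [eq_intCast, ne_eq, Int.cast_eq_zero]
    intro h0; rw [h0] at hI; simp at hI; omega
  have h1 := Matrix.linearIndependent_rows_of_det_ne_zero hd
  have h2 : LinearIndependent ℚ ((LinearMap.funLeft ℚ ℚ I) ∘ (fun i => zq (b i))) := h1
  exact h2.of_comp

theorem cov_pos_of_li {j m : ℕ} (b : Fin j → Fin m → ℤ)
    (h : LinearIndependent ℚ (fun i => zq (b i))) : 0 < cov b := by
  let M : Matrix (Fin j) (Fin m) ℚ := Matrix.of fun a c => (b a c : ℚ)
  have hr : M.rank = j := by
    have := LinearIndependent.rank_matrix (M := M) h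
    simpa using this
  rw [Matrix.rank_eq_finrank_span_cols] at hr
  have htop : Submodule.span ℚ (Set.range M.col) = ⊤ := by
    apply Submodule.eq_top_of_finrank_eq
    rw [hr]; simp
  obtain ⟨f, hf, -, hli⟩ := Submodule.exists_fun_fin_finrank_span_eq ℚ (Set.range M.col)
  choose I hI using hf
  let e : Fin j ≃ Fin (Module.finrank ℚ (Submodule.span ℚ (Set.range M.col))) := finCongr hr.symm
  have h2 : LinearIndependent ℚ (Matrix.of fun a c => (b a (I (e c)) : ℚ)).col := by
    have h3 := hli.comp e e.injective
    have h4 : (Matrix.of fun a c => (b a (I (e c)) : ℚ)).col = f ∘ e := by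
      ext c a
      simp only [Function.comp]
      rw [← hI]
      rfl
    rw [h4]; exact h3
  rw [Matrix.linearIndependent_cols_iff_isUnit, Matrix.isUnit_iff_isUnit_det] at h2
  have h4 := h2.ne_zero
  have : (Matrix.of fun a c => (b a (I (e c)) : ℚ)) =
      (Int.castRingHom ℚ).mapMatrix (Matrix.of fun a c => b a (I (e c))) := by ext; simp
  rw [this, ← RingHom.map_det] at h4
  simp only [eq_intCast, ne_eq, Int.cast_eq_zero] at h4
  have h5 := le_cov b (I ∘ e)
  have h6 : 0 < (Matrix.det (Matrix.of fun a c => b a ((I ∘ e) c))).natAbs := Int.natAbs_pos.2 h4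
  omega

theorem exists_short_aux {j : ℕ} (B : Matrix (Fin j) (Fin j) ℤ) (hB : B.det ≠ 0) (s : ℕ)
    (hs : B.det.natAbs < (s + 1) ^ j) :
    ∃ z u : Fin j → ℤ, u ≠ 0 ∧ (∀ i, |u i| ≤ s) ∧ Matrix.vecMul z B = u := by
  have hli : LinearIndependent ℤ B.row := Matrix.linearIndependent_rows_of_det_ne_zero hB
  let N := Submodule.span ℤ (Set.range B.row)
  let bN : Module.Basis (Fin j) ℤ N := Module.Basis.span hli
  have hcard : Nat.card ((Fin j → ℤ) ⧸ N) = B.det.natAbs := by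
    rw [← Submodule.natAbs_det_basis_change (Pi.basisFun ℤ (Fin j)) N bN]
    have : ((↑) ∘ bN : Fin j → Fin j → ℤ) = B.row := by
      ext i k
      simp only [bN, Function.comp]
      rw [Module.Basis.span_apply]
    rw [this, Pi.basisFun_det]
    rfl
  have hfin : Finite ((Fin j → ℤ) ⧸ N) := by
    apply Nat.finite_of_card_ne_zero
    rw [hcard]; simpa using hB
  have := Fintype.ofFinite ((Fin j → ℤ) ⧸ N)
  let g : (Fin j → Fin (s+1)) → ((Fin j → ℤ) ⧸ N) := fun x => Submodule.Quotient.mk (fun i => ((x i : ℕ) : ℤ))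
  obtain ⟨x, y, hxy, hg⟩ := Fintype.exists_ne_map_eq_of_card_lt g (by
    rw [← Nat.card_eq_fintype_card, hcard]; simpa using hs)
  rw [Submodule.Quotient.eq, Submodule.mem_span_range_iff_exists_fun] at hg
  obtain ⟨z, hz⟩ := hg
  refine ⟨z, _, ?_, ?_, (Matrix.vecMul_eq_sum z B).trans hz⟩
  · intro h
    apply hxy
    ext i
    have := congrFun h i
    simp at this
    omega
  · intro i
    have h1 := (x i).2
    have h2 := (y i).2
    simp only [Pi.sub_apply]
    rw [abs_le]; constructor <;> omega

theorem exists_short {j m : ℕ} (b : Fin j → Fin m → ℤ) (hj : 0 < j) (h : 0 < cov b) :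
    ∃ z : Fin j → ℤ, (∑ i, z i • b i) ≠ 0 ∧ ‖∑ i, z i • b i‖ ^ j ≤ (m : ℝ) ^ j * cov b := by
  obtain ⟨I, hI⟩ := cov_exists b h
  set B : Matrix (Fin j) (Fin j) ℤ := Matrix.of fun a c => b a (I c) with hBdef
  have hB : B.det ≠ 0 := by intro h0; rw [h0] at hI; simp at hI; omega
  obtain ⟨s, hs1, hs2⟩ : ∃ s : ℕ, s ^ j ≤ cov b ∧ cov b < (s + 1) ^ j :=
    ⟨Nat.nthRoot j (cov b), Nat.pow_nthRoot_le (by omega) , Nat.lt_pow_nthRoot_add_one (by omega) _⟩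
  obtain ⟨z, u, hu0, hu, hz⟩ := exists_short_aux B hB s (by rw [hI]; exact hs2)
  have hm : j ≤ m := by
    have := (li_of_cov_pos b h).fintype_card_le_finrank
    simpa using this
  have hcoord : ∀ k, |(∑ i, z i • b i) k| ≤ j * s := by
    intro k
    have e1 : (∑ i, z i • b i) k = z ⬝ᵥ (fun i => b i k) := by
      simp [dotProduct, Finset.sum_apply]
    have e2 : B.det * (∑ i, z i • b i) k = u ⬝ᵥ B.cramer (fun i => b i k) := by
      rw [e1, ← hz, ← Matrix.dotProduct_mulVec, Matrix.mulVec_cramer]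
      simp only [dotProduct_smul, smul_eq_mul]
    have e3 : ∀ c, |B.cramer (fun i => b i k) c| ≤ cov b := by
      intro c
      rw [Matrix.cramer_apply]
      have := le_cov b (Function.update I c k)
      have h2 : (Matrix.of fun a c' => b a (Function.update I c k c')) = B.updateCol c (fun i => b i k) := by
        ext a c'
        by_cases hc : c' = c
        · subst hc; simp
        · simp [hc, hBdef]
      rw [h2] at this
      rw [Int.abs_eq_natAbs]; exact_mod_cast this
    have e4 : |B.det * (∑ i, z i • b i) k| ≤ j * s * cov b := by
      rw [e2, dotProduct]
      refine (Finset.abs_sum_le_sum_abs _ _).trans ?_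
      refine (Finset.sum_le_sum (g := fun _ => (s : ℤ) * cov b) (fun c _ => ?_)).trans (by simp [mul_assoc])
      rw [abs_mul]
      exact mul_le_mul (hu c) (e3 c) (abs_nonneg _) (by positivity)
    rw [abs_mul, Int.abs_eq_natAbs B.det, hI, mul_comm] at e4
    exact le_of_mul_le_mul_right e4 (by exact_mod_cast h)
  refine ⟨z, ?_, ?_⟩
  · intro h0
    apply hu0
    ext c
    have := congrFun h0 (I c)
    rw [← hz]
    simpa [Matrix.vecMul, dotProduct, hBdef] using this
  · have hn : ‖∑ i, z i • b i‖ ≤ m * s := by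
      rw [pi_norm_le_iff_of_nonneg (by positivity)]
      intro k
      rw [Int.norm_eq_abs]
      have h1 := hcoord k
      have h2 : ((j * s : ℤ) : ℝ) ≤ m * s := by push_cast; gcongr
      refine le_trans ?_ h2
      exact_mod_cast h1
    calc _ ≤ ((m : ℝ) * s) ^ j := by gcongr
      _ = (m : ℝ)^j * ((s^j : ℕ) : ℝ) := by push_cast; ring
      _ ≤ _ := by gcongr

theorem zq_sum {j m : ℕ} (b : Fin j → Fin m → ℤ) (z : Fin j → ℤ) :
    zq (∑ i, z i • b i) = ∑ i, (z i : ℚ) • zq (b i) := by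
  ext k
  simp [zq, Finset.sum_apply]

theorem exists_lattice_basis {m : ℕ} (V : Submodule ℚ (Fin m → ℚ)) :
    ∃ b : Fin (Module.finrank ℚ V) → Fin m → ℤ, (∀ i, zq (b i) ∈ V) ∧ 0 < cov b ∧
      ∀ q : Fin m → ℤ, zq q ∈ V → ∃ a : Fin (Module.finrank ℚ V) → ℤ, q = ∑ i, a i • b i := by
  let φ : (Fin m → ℤ) →ₗ[ℤ] (Fin m → ℚ) :=
    { toFun := zq
      map_add' := fun x y => by ext; simp [zq]
      map_smul' := fun x y => by ext; simp [zq] }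
  let Γ : Submodule ℤ (Fin m → ℤ) := (V.restrictScalars ℤ).comap φ
  obtain ⟨r, B⟩ := Submodule.basisOfPid (Pi.basisFun ℤ (Fin m)) Γ
  have hmem : ∀ i, zq (B i : Fin m → ℤ) ∈ V := fun i => (B i).2
  have hspan : ∀ q : Fin m → ℤ, zq q ∈ V → ∃ a : Fin r → ℤ, q = ∑ i, a i • (B i : Fin m → ℤ) := by
    intro q hq
    have := B.sum_repr ⟨q, hq⟩
    refine ⟨fun i => B.repr ⟨q, hq⟩ i, ?_⟩
    have h2 := congrArg Γ.subtype this
    rw [map_sum] at h2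
    simp only [map_smul] at h2
    exact h2.symm
  have hli : LinearIndependent ℚ (fun i => zq (B i : Fin m → ℤ)) := by
    rw [← LinearIndependent.iff_fractionRing ℤ ℚ]
    have h1 : LinearIndependent ℤ (fun i => (B i : Fin m → ℤ)) :=
      B.linearIndependent.map' Γ.subtype (Submodule.ker_subtype _)
    have hφ : LinearMap.ker φ = ⊥ := by
      rw [LinearMap.ker_eq_bot]
      intro x y hxy
      ext k
      have := congrFun hxy k
      simpa [φ, zq] using this
    exact h1.map' φ hφ
  have hsp : Submodule.span ℚ (Set.range (fun i => zq (B i : Fin m → ℤ))) = V := by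
    apply le_antisymm
    · rw [Submodule.span_le]; rintro _ ⟨i, rfl⟩; exact hmem i
    · intro x hx
      obtain ⟨N, hN⟩ := IsLocalization.exist_integer_multiples_of_finset (nonZeroDivisors ℤ)
        (Finset.univ.image x)
      have hN' : ∀ k, ∃ y : ℤ, (y : ℚ) = (N : ℤ) * x k := by
        intro k
        obtain ⟨y, hy⟩ := hN (x k) (by simp)
        refine ⟨y, ?_⟩
        simpa using hy
      choose y hy using hN'
      have hN0 : ((N : ℤ) : ℚ) ≠ 0 := by
        have := nonZeroDivisors.ne_zero N.2
        exact_mod_cast this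
      have hyx : zq y = ((N : ℤ) : ℚ) • x := by ext k; simp [zq, hy]
      have hyV : zq y ∈ V := by rw [hyx]; exact V.smul_mem _ hx
      obtain ⟨a, ha⟩ := hspan y hyV
      have hx' : x = ((N : ℤ) : ℚ)⁻¹ • zq y := by rw [hyx, smul_smul, inv_mul_cancel₀ hN0, one_smul]
      rw [hx']
      apply Submodule.smul_mem
      rw [ha, zq_sum]
      exact Submodule.sum_mem _ fun i _ => Submodule.smul_mem _ _ (Submodule.subset_span ⟨i, rfl⟩)
  have hr : Module.finrank ℚ V = r := by
    have := finrank_span_eq_card hli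
    rw [hsp] at this
    simpa using this
  rw [hr]
  exact ⟨fun i => B i, hmem, cov_pos_of_li _ hli, hspan⟩


/-- the linear form -/
noncomputable def lf (p : ℕ) [Fact p.Prime] {m : ℕ} (y : Fin m → ℚ_[p]) (q : Fin m → ℤ) : ℚ_[p] :=
  ∑ i, (q i : ℚ_[p]) * y i

theorem lf_sum (p : ℕ) [Fact p.Prime] {j m : ℕ} (y : Fin m → ℚ_[p]) (b : Fin j → Fin m → ℤ)
    (z : Fin j → ℤ) : lf p y (∑ i, z i • b i) = ∑ i, (z i : ℚ_[p]) * lf p y (b i) := by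
  simp only [lf, Finset.mul_sum]
  rw [Finset.sum_comm]
  refine Finset.sum_congr rfl fun k _ => ?_
  simp [Finset.sum_apply, Finset.sum_mul, mul_assoc]

theorem lf_sub (p : ℕ) [Fact p.Prime] {m : ℕ} (y : Fin m → ℚ_[p]) (q q' : Fin m → ℤ) (k : ℤ) :
    lf p y (q - k • q') = lf p y q - k * lf p y q' := by
  simp only [lf, Finset.mul_sum, ← Finset.sum_sub_distrib]
  refine Finset.sum_congr rfl fun k _ => ?_
  simp; ring

theorem lf_smul (p : ℕ) [Fact p.Prime] {m : ℕ} (y : Fin m → ℚ_[p]) (q' : Fin m → ℤ) (k : ℤ) :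
    lf p y (k • q') = k * lf p y q' := by
  simp only [lf, Finset.mul_sum]
  refine Finset.sum_congr rfl fun k _ => ?_
  simp; ring

/-- lattice basis -/
noncomputable def lb {m : ℕ} (V : Submodule ℚ (Fin m → ℚ)) :
    Fin (Module.finrank ℚ V) → Fin m → ℤ := (exists_lattice_basis V).choose

theorem lb_mem {m : ℕ} (V : Submodule ℚ (Fin m → ℚ)) (i) : zq (lb V i) ∈ V :=
  (exists_lattice_basis V).choose_spec.1 i
theorem lb_pos {m : ℕ} (V : Submodule ℚ (Fin m → ℚ)) : 0 < cov (lb V) :=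
  (exists_lattice_basis V).choose_spec.2.1
theorem lb_span {m : ℕ} (V : Submodule ℚ (Fin m → ℚ)) (q : Fin m → ℤ) (hq : zq q ∈ V) :
    ∃ a : Fin (Module.finrank ℚ V) → ℤ, q = ∑ i, a i • lb V i :=
  (exists_lattice_basis V).choose_spec.2.2 q hq

/-- covolume of the sublattice -/
noncomputable def psi (p : ℕ) [Fact p.Prime] {m : ℕ} (T : ℕ) (V : Submodule ℚ (Fin m → ℚ))
    (y : Fin m → ℚ_[p]) : ℝ :=
  cov (lb V) * max 1 ((p : ℝ) ^ T * ‖fun i => lf p y (lb V i)‖)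

theorem cov_le_psi (p : ℕ) [Fact p.Prime] {m : ℕ} (T : ℕ) (V : Submodule ℚ (Fin m → ℚ))
    (y : Fin m → ℚ_[p]) : (cov (lb V) : ℝ) ≤ psi p T V y :=
  le_mul_of_one_le_right (by positivity) (le_max_left _ _)

theorem psi_pos (p : ℕ) [Fact p.Prime] {m : ℕ} (T : ℕ) (V : Submodule ℚ (Fin m → ℚ))
    (y : Fin m → ℚ_[p]) : 0 < psi p T V y :=
  lt_of_lt_of_le (by exact_mod_cast lb_pos V) (cov_le_psi p T V y)

theorem exists_nat_approx (p : ℕ) [Fact p.Prime] (z : ℚ_[p]) (hz : ‖z‖ ≤ 1) (N : ℕ) :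
    ∃ k : ℤ, ‖z - k‖ ≤ (p : ℝ) ^ (-(N : ℤ)) := by
  refine ⟨(PadicInt.appr (⟨z, hz⟩ : ℤ_[p]) N : ℕ), ?_⟩
  have := PadicInt.appr_spec N (⟨z, hz⟩ : ℤ_[p])
  rw [← PadicInt.norm_le_pow_iff_mem_span_pow, PadicInt.norm_def] at this
  exact_mod_cast this

theorem psi_upper (p : ℕ) [Fact p.Prime] {m : ℕ} (T : ℕ) (V : Submodule ℚ (Fin m → ℚ))
    (y : Fin m → ℚ_[p]) : ∃ b : Fin (Module.finrank ℚ V) → Fin m → ℤ, (∀ i, zq (b i) ∈ V) ∧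
      (∀ i, ‖lf p y (b i)‖ ≤ (p : ℝ) ^ (-(T : ℤ))) ∧ 0 < cov b ∧ (cov b : ℝ) ≤ psi p T V y := by
  have hp0 : (0 : ℝ) < p := by exact_mod_cast (Fact.out : p.Prime).pos
  by_cases hall : ∀ i, ‖lf p y (lb V i)‖ ≤ (p : ℝ) ^ (-(T : ℤ))
  · exact ⟨lb V, lb_mem V, hall, lb_pos V, cov_le_psi p T V y⟩
  push Not at hall
  obtain ⟨i1, hi1⟩ := hall
  obtain ⟨i0, -, hi0⟩ := Finset.exists_max_image Finset.univ (fun i => ‖lf p y (lb V i)‖) ⟨i1, Finset.mem_univ _⟩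
  have hi0' : (p : ℝ) ^ (-(T : ℤ)) < ‖lf p y (lb V i0)‖ := lt_of_lt_of_le hi1 (hi0 i1 (Finset.mem_univ _))
  have hne : lf p y (lb V i0) ≠ 0 := by
    rw [← norm_pos_iff]; exact lt_trans (by positivity) hi0'
  obtain ⟨s, hs⟩ := Padic.norm_eq_zpow_neg_valuation hne |>.symm ▸ (⟨(lf p y (lb V i0)).valuation, rfl⟩ : ∃ s : ℤ, (p : ℝ) ^ (-(lf p y (lb V i0)).valuation) = (p : ℝ) ^ (-s))
  obtain ⟨N, hN⟩ : ∃ N : ℕ, (T : ℤ) = s + N := by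
    rw [hs, zpow_lt_zpow_iff_right₀ (by exact_mod_cast (Fact.out : p.Prime).one_lt)] at hi0'
    exact ⟨(T - s).toNat, by omega⟩
  have hk : ∀ i, ∃ k : ℤ, ‖lf p y (lb V i) / lf p y (lb V i0) - k‖ ≤ (p : ℝ) ^ (-(N : ℤ)) := by
    intro i
    apply exists_nat_approx
    rw [norm_div, div_le_one (norm_pos_iff.2 hne)]
    exact hi0 i (Finset.mem_univ _)
  choose k hk using hk
  let c : Fin (Module.finrank ℚ V) → ℤ := fun i => if i = i0 then 0 else - k i
  let b1 : Fin (Module.finrank ℚ V) → Fin m → ℤ := fun i => lb V i + c i • lb V i0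
  let b : Fin (Module.finrank ℚ V) → Fin m → ℤ :=
    Function.update b1 i0 ((p : ℤ) ^ N • lb V i0)
  have hmul : cov b = p ^ N * cov (lb V) := by
    rw [cov, cov, Finset.apply_sup_eq_sup_comp (fun x : ℕ => p ^ N * x)
      (fun x y => by simp) (by simp)]
    congr 1
    ext I
    simp only [Function.comp]
    have e1 : (Matrix.of fun a c => b a (I c)) = (Matrix.of fun a c => b1 a (I c)).updateRow i0
        ((p : ℤ) ^ N • (Matrix.of fun a c => b1 a (I c)) i0) := by
      ext a c'
      by_cases ha : a = i0
      · subst ha; simp [b, b1, c]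
      · simp [b, b1, ha]
    have e2 : (Matrix.of fun a c => b1 a (I c)).det = (Matrix.of fun a c => lb V a (I c)).det := by
      apply Matrix.det_eq_of_forall_row_eq_smul_add_const c i0 (by simp [c])
      intro i j; simp [b1]
    rw [e1, Matrix.det_updateRow_smul, Matrix.updateRow_eq_self, e2, Int.natAbs_mul]
    simp [Int.natAbs_pow]
  refine ⟨b, ?_, ?_, ?_, ?_⟩
  · intro i
    have hz : ∀ (u v : Fin m → ℤ) (r : ℤ), zq (u + r • v) = zq u + (r : ℚ) • zq v := by
      intro u v r; ext; simp [zq]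
    have hz2 : ∀ (v : Fin m → ℤ) (r : ℤ), zq (r • v) = (r : ℚ) • zq v := by
      intro v r; ext; simp [zq]
    by_cases hi : i = i0
    · subst hi
      simp only [b, Function.update_self]
      rw [hz2]; exact V.smul_mem _ (lb_mem V _)
    · simp only [b, Function.update_of_ne hi, b1]
      rw [hz]; exact V.add_mem (lb_mem V _) (V.smul_mem _ (lb_mem V _))
  · intro i
    by_cases hi : i = i0
    · subst hi
      simp only [b, Function.update_self]
      rw [lf_smul, norm_mul, hs]
      rw [hN]; push_cast; rw [norm_pow, Padic.norm_p, neg_add, zpow_add₀ hp0.ne', mul_comm]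
      simp
    · simp only [b, Function.update_of_ne hi, b1, c, if_neg hi, neg_smul, ← sub_eq_add_neg]
      rw [lf_sub]
      have : lf p y (lb V i) - k i * lf p y (lb V i0) =
        (lf p y (lb V i) / lf p y (lb V i0) - k i) * lf p y (lb V i0) := by
        field_simp
      rw [this, norm_mul, hs, hN, neg_add, zpow_add₀ hp0.ne', mul_comm]
      gcongr
      exact hk i
  · rw [hmul]; exact Nat.mul_pos (pow_pos (Fact.out : p.Prime).pos _) (lb_pos V)
  · rw [hmul, psi, mul_comm]
    push_cast
    gcongr
    refine le_max_of_le_right ?_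
    have h1 := norm_le_pi_norm (fun i => lf p y (lb V i)) i0
    calc (p : ℝ)^N = (p : ℝ)^T * ‖lf p y (lb V i0)‖ := by
          rw [hs, ← zpow_natCast, ← zpow_natCast, ← zpow_add₀ hp0.ne', hN]; ring_nf
      _ ≤ _ := by gcongr

theorem one_le_int_norm (p : ℕ) [Fact p.Prime] (z : ℤ) (hz : z ≠ 0) :
    1 ≤ (z.natAbs : ℝ) * ‖(z : ℚ_[p])‖ := by
  have hne : (z : ℚ_[p]) ≠ 0 := by exact_mod_cast hz
  have hp0 : (0 : ℝ) < p := by exact_mod_cast (Fact.out : p.Prime).pos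
  have h1 := Padic.norm_eq_zpow_neg_valuation hne
  rw [Padic.valuation_intCast] at h1
  have h2 : p ^ (padicValInt p z) ≤ z.natAbs := by
    apply Nat.le_of_dvd (Int.natAbs_pos.2 hz)
    unfold padicValInt
    exact pow_padicValNat_dvd
  rw [h1, zpow_neg, zpow_natCast, ← div_eq_mul_inv, le_div_iff₀ (by positivity), one_mul]
  exact_mod_cast h2

theorem psi_lower (p : ℕ) [Fact p.Prime] {m : ℕ} (T : ℕ) (V : Submodule ℚ (Fin m → ℚ))
    (y : Fin m → ℚ_[p]) (j : ℕ) (hj : j = Module.finrank ℚ V) (b : Fin j → Fin m → ℤ)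
    (hV : ∀ i, zq (b i) ∈ V) (hb : ∀ i, ‖lf p y (b i)‖ ≤ (p : ℝ) ^ (-(T : ℤ)))
    (h0 : 0 < cov b) : psi p T V y ≤ cov b := by
  subst hj
  have hp0 : (0 : ℝ) < p := by exact_mod_cast (Fact.out : p.Prime).pos
  choose A hA using fun i => lb_span V (b i) (hV i)
  have hcov : cov b = (Matrix.of A).det.natAbs * cov (lb V) := by
    apply cov_mul
    intro a k
    have := congrFun (hA a) k
    simpa [Finset.sum_apply] using this
  have hdet : (Matrix.of A).det ≠ 0 := by
    intro h; rw [h] at hcov; simp at hcov; omega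
  have h1 := one_le_int_norm p _ hdet
  have hl : ∀ i, ‖((Matrix.of A).det : ℚ_[p])‖ * ‖lf p y (lb V i)‖ ≤ (p : ℝ) ^ (-(T : ℤ)) := by
    intro i
    let A' : Matrix (Fin (Module.finrank ℚ V)) (Fin (Module.finrank ℚ V)) ℚ_[p] :=
      (Int.castRingHom ℚ_[p]).mapMatrix (Matrix.of A)
    have e1 : (fun i => lf p y (b i)) = A'.mulVec (fun i => lf p y (lb V i)) := by
      ext i
      rw [hA i, lf_sum]
      simp [A', Matrix.mulVec, dotProduct]
    have e2 : (A'.adjugate.mulVec (fun i => lf p y (b i))) i = A'.det * lf p y (lb V i) := by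
      rw [e1, Matrix.mulVec_mulVec, Matrix.adjugate_mul, Matrix.smul_mulVec, Matrix.one_mulVec]
      simp
    have e3 : A'.det = ((Matrix.of A).det : ℚ_[p]) := by
      simp only [A']
      rw [← RingHom.map_det]; simp
    have e4 : A'.adjugate = (Int.castRingHom ℚ_[p]).mapMatrix (Matrix.of A).adjugate := by
      simp only [A']
      rw [RingHom.map_adjugate]
    rw [← norm_mul, ← e3, ← e2, e4]
    simp only [Matrix.mulVec, dotProduct]
    apply IsUltrametricDist.norm_sum_le_of_forall_le_of_nonneg (by positivity)
    intro k _
    rw [norm_mul]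
    calc _ ≤ 1 * (p : ℝ) ^ (-(T : ℤ)) := by
          gcongr
          · simpa using Padic.norm_int_le_one _
          · exact hb k
      _ = _ := one_mul _
  rw [psi, hcov, mul_comm]
  push_cast
  gcongr
  apply max_le
  · have : 1 ≤ (Matrix.of A).det.natAbs := Int.natAbs_pos.2 hdet
    exact_mod_cast this
  · have hn0 : (0 : ℝ) ≤ ((p : ℝ)^T)⁻¹ * (Matrix.of A).det.natAbs := by positivity
    have : ‖fun i => lf p y (lb V i)‖ ≤ ((p : ℝ)^T)⁻¹ * (Matrix.of A).det.natAbs := by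
      rw [pi_norm_le_iff_of_nonneg hn0]
      intro i
      have h2 := hl i
      rw [zpow_neg, zpow_natCast] at h2
      calc ‖lf p y (lb V i)‖ ≤ ((Matrix.of A).det.natAbs * ‖((Matrix.of A).det : ℚ_[p])‖) * ‖lf p y (lb V i)‖ :=
            le_mul_of_one_le_left (norm_nonneg _) h1
        _ = (Matrix.of A).det.natAbs * (‖((Matrix.of A).det : ℚ_[p])‖ * ‖lf p y (lb V i)‖) := by ring
        _ ≤ (Matrix.of A).det.natAbs * ((p : ℝ)^T)⁻¹ := by gcongr
        _ = _ := mul_comm _ _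
    calc _ ≤ (p : ℝ)^T * (((p : ℝ)^T)⁻¹ * (Matrix.of A).det.natAbs) := by gcongr
      _ = _ := by field_simp

theorem psi_cons (p : ℕ) [Fact p.Prime] {m : ℕ} (T : ℕ) (V : Submodule ℚ (Fin m → ℚ))
    (y : Fin m → ℚ_[p]) (w : Fin m → ℤ) (hwV : zq w ∉ V) (hw : ‖lf p y w‖ ≤ (p : ℝ) ^ (-(T : ℤ))) :
    psi p T (V ⊔ Submodule.span ℚ {zq w}) y ≤ m * ‖w‖ * psi p T V y := by
  obtain ⟨b, hbV, hb, hb0, hbψ⟩ := psi_upper p T V y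
  have hfr := Submodule.finrank_sup_span_singleton hwV
  have hmem : ∀ i, zq ((Fin.cons w b : Fin (_ + 1) → Fin m → ℤ) i) ∈ V ⊔ Submodule.span ℚ {zq w} := by
    intro i
    refine Fin.cases ?_ (fun i => ?_) i
    · exact Submodule.mem_sup_right (Submodule.mem_span_singleton_self _)
    · exact Submodule.mem_sup_left (hbV i)
  have hm : Module.finrank ℚ V + 1 ≤ m := by
    rw [← hfr]
    simpa using Submodule.finrank_le (V ⊔ Submodule.span ℚ {zq w})
  have := psi_lower p T (V ⊔ Submodule.span ℚ {zq w}) y _ hfr.symm (Fin.cons w b) hmem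
    (by intro i; refine Fin.cases ?_ (fun i => ?_) i
        · exact hw
        · exact hb i)
    (by
      apply cov_pos_of_li
      have e : (fun i => zq ((Fin.cons w b : Fin (_ + 1) → Fin m → ℤ) i)) =
          Fin.cons (zq w) (fun i => zq (b i)) := by
        ext i : 1
        refine Fin.cases ?_ (fun i => ?_) i <;> simp
      rw [e, linearIndependent_finCons]
      refine ⟨li_of_cov_pos b hb0, fun h => hwV ?_⟩
      refine (Submodule.span_le.2 ?_) h
      rintro _ ⟨i, rfl⟩; exact hbV i)
  calc _ ≤ _ := this
    _ ≤ _ := cov_cons b w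
    _ ≤ _ := by
      gcongr
      exact_mod_cast hm

theorem psi_minkowski (p : ℕ) [Fact p.Prime] {m : ℕ} (T : ℕ) (V : Submodule ℚ (Fin m → ℚ))
    (y : Fin m → ℚ_[p]) (η : ℝ) (hη : 0 ≤ η)
    (h : ∀ q : Fin m → ℤ, q ≠ 0 → ‖lf p y q‖ ≤ (p : ℝ) ^ (-(T : ℤ)) → η ≤ ‖q‖) :
    (η / m) ^ (Module.finrank ℚ V) ≤ psi p T V y := by
  obtain ⟨b, hbV, hb, hb0, hbψ⟩ := psi_upper p T V y
  refine le_trans ?_ hbψ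
  rcases Nat.eq_zero_or_pos (Module.finrank ℚ V) with h0 | h0
  · have h1 : (η / m) ^ (Module.finrank ℚ V) = 1 := by rw [h0, pow_zero]
    rw [h1]; exact_mod_cast hb0
  obtain ⟨z, hz, hz2⟩ := exists_short b h0 hb0
  have hp0 : (0 : ℝ) < p := by exact_mod_cast (Fact.out : p.Prime).pos
  have h1 := h _ hz (by
    rw [lf_sum]
    apply IsUltrametricDist.norm_sum_le_of_forall_le_of_nonneg (by positivity)
    intro k _
    rw [norm_mul]
    calc _ ≤ 1 * (p : ℝ) ^ (-(T : ℤ)) := by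
          gcongr
          · exact Padic.norm_int_le_one _
          · exact hb k
      _ = _ := one_mul _)
  have hm : 0 < m := by
    have := Submodule.finrank_le V
    simp at this; omega
  rw [div_pow, div_le_iff₀ (by positivity), mul_comm]
  refine le_trans ?_ hz2
  gcongr

theorem psi_good (p : ℕ) [Fact p.Prime] {m : ℕ} (T : ℕ) (V : Submodule ℚ (Fin m → ℚ))
    (y1 : Fin m → ℚ_[p]) (ρ ε : ℝ) (hε : 0 < ε) (hε1 : ε ≤ 1) (h : ρ ≤ psi p T V y1) :
    ∃ q : Fin m → ℤ, ∀ y, psi p T V y < ε * ρ → ‖lf p y q‖ < ε * ‖lf p y1 q‖ := by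
  have hp0 : (0 : ℝ) < p := by exact_mod_cast (Fact.out : p.Prime).pos
  have hc : (0 : ℝ) < cov (lb V) := by exact_mod_cast lb_pos V
  by_cases hρ : ρ ≤ cov (lb V)
  · refine ⟨0, fun y hy => ?_⟩
    have h1 := cov_le_psi p T V y
    have h2 := psi_pos p T V y
    have : 0 < ρ := by
      by_contra h3
      push Not at h3
      nlinarith
    nlinarith
  push Not at hρ
  have h3 : ρ ≤ cov (lb V) * ((p : ℝ) ^ T * ‖fun i => lf p y1 (lb V i)‖) := by
    rw [psi] at h
    rcases max_cases 1 ((p : ℝ) ^ T * ‖fun i => lf p y1 (lb V i)‖) with h4 | h4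
    · rw [h4.1] at h; linarith
    · rwa [h4.1] at h
  have hne : Nonempty (Fin (Module.finrank ℚ V)) := by
    by_contra hne
    rw [not_nonempty_iff] at hne
    have : ‖fun i => lf p y1 (lb V i)‖ = 0 := by
      rw [norm_eq_zero]; ext i; exact hne.elim i
    rw [this] at h3; simp at h3; linarith
  obtain ⟨i, -, hi⟩ := Finset.exists_max_image Finset.univ (fun i => ‖lf p y1 (lb V i)‖) Finset.univ_nonempty
  have h5 : ‖fun i => lf p y1 (lb V i)‖ ≤ ‖lf p y1 (lb V i)‖ := by
    rw [pi_norm_le_iff_of_nonneg (norm_nonneg _)]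
    intro k; exact hi k (Finset.mem_univ _)
  refine ⟨lb V i, fun y hy => ?_⟩
  have h6 : cov (lb V) * ((p : ℝ) ^ T * ‖lf p y (lb V i)‖) ≤ psi p T V y := by
    rw [psi]
    gcongr
    refine le_max_of_le_right ?_
    gcongr
    exact norm_le_pi_norm (fun i => lf p y (lb V i)) i
  have h7 : cov (lb V) * (p : ℝ) ^ T * ‖lf p y (lb V i)‖ < cov (lb V) * (p : ℝ) ^ T * (ε * ‖lf p y1 (lb V i)‖) := by
    calc _ = cov (lb V) * ((p : ℝ) ^ T * ‖lf p y (lb V i)‖) := by ring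
      _ ≤ _ := h6
      _ < ε * ρ := hy
      _ ≤ ε * (cov (lb V) * ((p : ℝ) ^ T * ‖fun i => lf p y1 (lb V i)‖)) := by gcongr
      _ ≤ ε * (cov (lb V) * ((p : ℝ) ^ T * ‖lf p y1 (lb V i)‖)) := by gcongr
      _ = _ := by ring
  exact lt_of_mul_lt_mul_left h7 (by positivity)

theorem psi_const (p : ℕ) [Fact p.Prime] {m : ℕ} (T : ℕ) (V : Submodule ℚ (Fin m → ℚ))
    (y y' : Fin m → ℚ_[p]) (h : ∀ q, ‖lf p y q - lf p y' q‖ ≤ (p : ℝ) ^ (-(T : ℤ))) :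
    psi p T V y ≤ psi p T V y' := by
  have hp0 : (0 : ℝ) < p := by exact_mod_cast (Fact.out : p.Prime).pos
  rw [psi, psi]
  apply mul_le_mul_of_nonneg_left _ (Nat.cast_nonneg _)
  apply max_le (le_max_left _ _)
  rw [← le_div_iff₀' (by positivity)]
  rw [pi_norm_le_iff_of_nonneg (by positivity)]
  intro i
  rw [le_div_iff₀' (by positivity)]
  have h1 : ‖lf p y (lb V i)‖ ≤ max ((p : ℝ) ^ (-(T : ℤ))) ‖lf p y' (lb V i)‖ := by
    have := IsUltrametricDist.norm_add_le_max (lf p y (lb V i) - lf p y' (lb V i)) (lf p y' (lb V i))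
    rw [sub_add_cancel] at this
    exact this.trans (max_le_max (h _) le_rfl)
  calc _ ≤ (p : ℝ)^T * max ((p : ℝ) ^ (-(T : ℤ))) ‖lf p y' (lb V i)‖ := by gcongr
    _ = max ((p : ℝ)^T * (p : ℝ) ^ (-(T : ℤ))) ((p : ℝ)^T * ‖lf p y' (lb V i)‖) := by
      rw [mul_max_of_nonneg _ _ (by positivity)]
    _ ≤ _ := by
      apply max_le_max
      · rw [zpow_neg, zpow_natCast, mul_inv_cancel₀ (by positivity)]
      · gcongr
        exact norm_le_pi_norm (fun i => lf p y' (lb V i)) i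


noncomputable instance instMSZp (p : ℕ) [Fact p.Prime] : MeasurableSpace ℤ_[p] := borel _
instance instBSZp (p : ℕ) [Fact p.Prime] : BorelSpace ℤ_[p] := ⟨rfl⟩

/-- balls -/
def pb (p : ℕ) [Fact p.Prime] (a : ℤ_[p]) (l : ℕ) : Set ℤ_[p] := {x | ‖x - a‖ ≤ (p : ℝ) ^ (-(l : ℤ))}

theorem pb_cover (p : ℕ) [Fact p.Prime] (a : ℤ_[p]) (l : ℕ) :
    pb p a l ⊆ ⋃ i ∈ Finset.range p, pb p (a + i * p ^ l) (l + 1) := by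
  intro x hx
  simp only [pb, Set.mem_ofPred_eq] at hx
  rw [PadicInt.norm_le_pow_iff_mem_span_pow, Ideal.mem_span_singleton] at hx
  obtain ⟨z, hz⟩ := hx
  have h1 := PadicInt.appr_spec 1 z
  rw [Ideal.mem_span_singleton] at h1
  obtain ⟨u, hu⟩ := h1
  simp only [Set.mem_iUnion, pb, Set.mem_ofPred_eq]
  refine ⟨z.appr 1, Finset.mem_range.2 ?_, ?_⟩
  · simpa using PadicInt.appr_lt z 1
  · rw [PadicInt.norm_le_pow_iff_mem_span_pow, Ideal.mem_span_singleton]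
    refine ⟨u, ?_⟩
    linear_combination hz + (p : ℤ_[p]) ^ l * hu

theorem pb_child (p : ℕ) [Fact p.Prime] (a : ℤ_[p]) (l i : ℕ) :
    pb p (a + i * p ^ l) (l + 1) ⊆ pb p a l := by
  intro x hx
  simp only [pb, Set.mem_ofPred_eq] at hx ⊢
  rw [PadicInt.norm_le_pow_iff_mem_span_pow, Ideal.mem_span_singleton] at hx ⊢
  obtain ⟨z, hz⟩ := hx
  refine ⟨i + p * z, ?_⟩
  linear_combination hz

section tree
variable {m : ℕ}

/-- chain of nonzero subspaces -/
def Flg (C : Finset (Submodule ℚ (Fin m → ℚ))) : Prop :=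
  ⊥ ∉ C ∧ ∀ V ∈ C, ∀ W ∈ C, V ≤ W ∨ W ≤ V

/-- compatible -/
def Cpt (C : Finset (Submodule ℚ (Fin m → ℚ))) (V : Submodule ℚ (Fin m → ℚ)) : Prop :=
  V ≠ ⊥ ∧ V ∉ C ∧ ∀ W ∈ C, V ≤ W ∨ W ≤ V

/-- marked points -/
def Mrk {X : Type*} (ψ : Submodule ℚ (Fin m → ℚ) → X → ℝ) (ρ : Submodule ℚ (Fin m → ℚ) → ℝ) (ε : ℝ)
    (C : Finset (Submodule ℚ (Fin m → ℚ))) (x : X) : Prop :=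
  ∃ D : Finset (Submodule ℚ (Fin m → ℚ)), C ⊆ D ∧ Flg D ∧
    (∀ V ∈ D, V ∉ C → ε * ρ V ≤ ψ V x ∧ ψ V x ≤ ρ V) ∧ ∀ V, Cpt D V → ρ V ≤ ψ V x

theorem Flg.card_le {C : Finset (Submodule ℚ (Fin m → ℚ))} (h : Flg C) : C.card ≤ m := by
  have : C.card ≤ (Finset.Icc 1 m).card := by
    apply Finset.card_le_card_of_injOn (fun V : Submodule ℚ (Fin m → ℚ) => Module.finrank ℚ V)
    · intro V hV
      have h1 : V ≠ ⊥ := fun e => h.1 (e ▸ hV)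
      have h2 := Submodule.finrank_le V
      have h3 : Module.finrank ℚ V ≠ 0 := by
        rwa [Ne, Submodule.finrank_eq_zero]
      rw [Module.finrank_fin_fun] at h2
      simp only [Finset.coe_Icc, Set.mem_Icc]
      omega
    · intro V hV W hW e
      rcases h.2 V hV W hW with h1 | h1
      · exact Submodule.eq_of_le_of_finrank_eq h1 e
      · exact (Submodule.eq_of_le_of_finrank_eq h1 e.symm).symm
  simpa using this

open Classical in
theorem Flg.insert {C : Finset (Submodule ℚ (Fin m → ℚ))} (h : Flg C) {V} (hV : Cpt C V) :
    Flg (insert V C) := by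
  refine ⟨?_, ?_⟩
  · rw [Finset.mem_insert]; push Not
    exact ⟨fun e => hV.1 e.symm, h.1⟩
  · intro A hA B hB
    rw [Finset.mem_insert] at hA hB
    rcases hA with rfl | hA <;> rcases hB with rfl | hB
    · exact Or.inl le_rfl
    · exact hV.2.2 _ hB
    · exact (hV.2.2 _ hA).symm
    · exact h.2 _ hA _ hB

open Classical in
theorem Cpt.of_insert {C : Finset (Submodule ℚ (Fin m → ℚ))} {V W} (h : Cpt (insert V C) W) :
    Cpt C W := by
  refine ⟨h.1, fun h2 => h.2.1 (Finset.mem_insert_of_mem h2), fun U hU => h.2.2 U (Finset.mem_insert_of_mem hU)⟩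

/-- constants -/
noncomputable def KK (p : ℕ) : ℕ → ℝ≥0∞
  | 0 => 0
  | k + 1 => p * (KK p k + 1)

theorem KK_ne_top (p k : ℕ) : KK p k ≠ ⊤ := by
  induction k with
  | zero => simp [KK]
  | succ k ih => rw [KK]; finiteness

open Classical in
theorem tree (p : ℕ) [Fact p.Prime] (ν : Measure ℤ_[p])
    (hν : ∀ a b l, ν (pb p a l) = p * ν (pb p b (l + 1)))
    (ψ : Submodule ℚ (Fin m → ℚ) → ℤ_[p] → ℝ) (ρ : Submodule ℚ (Fin m → ℚ) → ℝ) (ε : ℝ)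
    (δ : ℝ≥0∞) (N : ℕ)
    (hgood : ∀ V a l x1, x1 ∈ pb p a l → ρ V ≤ ψ V x1 →
      ν {x | x ∈ pb p a l ∧ ψ V x < ε * ρ V} ≤ δ * ν (pb p a l))
    (hconst : ∀ V a x x', x ∈ pb p a N → x' ∈ pb p a N → ψ V x ≤ ψ V x') (k : ℕ) :
    ∀ C : Finset (Submodule ℚ (Fin m → ℚ)), Flg C → C.card + k = m → ∀ j l a, l + j = N →
      (∀ V, Cpt C V → ∃ x ∈ pb p a l, ρ V ≤ ψ V x) →
      ν {x | x ∈ pb p a l ∧ ¬ Mrk ψ ρ ε C x} ≤ KK p k * δ * ν (pb p a l) := by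
  induction k using Nat.strong_induction_on with
  | _ k ih =>
  intro C hC hcard j
  induction j with
  | zero =>
    intro l a hl hx
    have : {x | x ∈ pb p a l ∧ ¬ Mrk ψ ρ ε C x} = ∅ := by
      rw [Set.eq_empty_iff_forall_notMem]
      rintro x ⟨hx1, hx2⟩
      apply hx2
      refine ⟨C, subset_rfl, hC, fun V hV hV' => absurd hV hV', fun V hV => ?_⟩
      obtain ⟨x', hx', h⟩ := hx V hV
      have : l = N := by omega
      subst this
      exact h.trans (hconst V a _ _ hx' hx1)
    rw [this]; simp
  | succ j ihj =>
    intro l a hl hx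
    have key : ∀ i : ℕ, ν {x | x ∈ pb p (a + i * p ^ l) (l + 1) ∧ ¬ Mrk ψ ρ ε C x} ≤
        KK p k * δ * ν (pb p (a + i * p ^ l) (l + 1)) := by
      intro i
      by_cases hi : ∀ V, Cpt C V → ∃ x ∈ pb p (a + i * p ^ l) (l + 1), ρ V ≤ ψ V x
      · exact ihj (l + 1) _ (by omega) hi
      · push Not at hi
        obtain ⟨V, hV, hVi⟩ := hi
        have hF := hC.insert hV
        have hc : (insert V C).card = C.card + 1 := Finset.card_insert_of_notMem hV.2.1
        have hle := hF.card_le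
        obtain _ | k := k
        · exfalso; omega
        · have h1 := ih k (by omega) (insert V C) hF (by omega) (j + 1) l a hl (fun W hW => hx W hW.of_insert)
          obtain ⟨x1, hx1, hx1'⟩ := hx V hV
          have h2 := hgood V a l x1 hx1 hx1'
          have hsub : {x | x ∈ pb p (a + i * p ^ l) (l + 1) ∧ ¬ Mrk ψ ρ ε C x} ⊆
              {x | x ∈ pb p a l ∧ ¬ Mrk ψ ρ ε (insert V C) x} ∪ {x | x ∈ pb p a l ∧ ψ V x < ε * ρ V} := by
            rintro x ⟨hx1, hx2⟩
            by_contra h3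
            simp only [Set.mem_union, Set.mem_ofPred_eq, not_or, not_and, not_not, not_lt] at h3
            have hxB := pb_child p a l i hx1
            obtain ⟨D, hD1, hD2, hD3, hD4⟩ := h3.1 hxB
            apply hx2
            refine ⟨D, (Finset.subset_insert _ _).trans hD1, hD2, ?_, hD4⟩
            intro W hW hW'
            by_cases hWV : W = V
            · subst hWV
              exact ⟨h3.2 hxB, (hVi x hx1).le⟩
            · exact hD3 W hW (by simp [hWV, hW'])
          calc _ ≤ _ := measure_mono hsub
            _ ≤ _ := measure_union_le _ _
            _ ≤ KK p k * δ * ν (pb p a l) + δ * ν (pb p a l) := add_le_add h1 h2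
            _ = (KK p k + 1) * δ * (p * ν (pb p (a + i * p ^ l) (l + 1))) := by
              rw [← hν a (a + i * p ^ l) l]; ring
            _ = _ := by rw [KK]; ring
    have hsub : {x | x ∈ pb p a l ∧ ¬ Mrk ψ ρ ε C x} ⊆
        ⋃ i ∈ Finset.range p, {x | x ∈ pb p (a + i * p ^ l) (l + 1) ∧ ¬ Mrk ψ ρ ε C x} := by
      rintro x ⟨hx1, hx2⟩
      have := pb_cover p a l hx1
      simp only [Set.mem_iUnion] at this ⊢
      obtain ⟨i, hi, h⟩ := this
      exact ⟨i, hi, h, hx2⟩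
    calc _ ≤ _ := measure_mono hsub
      _ ≤ _ := measure_biUnion_finset_le _ _
      _ ≤ ∑ i ∈ Finset.range p, KK p k * δ * ν (pb p a (l + 1)) := by
        apply Finset.sum_le_sum
        intro i _
        refine (key i).trans (le_of_eq ?_)
        have e1 := hν a a l
        have e2 := hν a (a + i * p ^ l) l
        have hp : (p : ℝ≥0∞) ≠ 0 := by exact_mod_cast (Fact.out : p.Prime).ne_zero
        congr 1
        exact (ENNReal.mul_right_inj hp (by simp)).1 (e2.symm.trans e1)
      _ = _ := by
        rw [hν a a l]; simp; ring
end tree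


theorem psi_bot (p : ℕ) [Fact p.Prime] {m : ℕ} (T : ℕ) (y : Fin m → ℚ_[p]) : psi p T ⊥ y ≤ 1 := by
  have := psi_lower p T (⊥ : Submodule ℚ (Fin m → ℚ)) y 0 (finrank_bot ℚ _).symm (fun i => i.elim0)
    (fun i => i.elim0) (fun i => i.elim0) (by rw [cov_zero]; exact one_pos)
  rwa [cov_zero, Nat.cast_one] at this

open Classical in
theorem mrk_short (p : ℕ) [Fact p.Prime] {m : ℕ} {X : Type*} (F : X → Fin m → ℚ_[p]) (T : ℕ)
    (η ε : ℝ) (hη : 0 < η) (hε : 0 < ε) (hε1 : ε ≤ 1) (x : X)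
    (h : Mrk (fun V x => psi p T V (F x)) (fun V => η ^ (Module.finrank ℚ V)) ε ∅ x)
    (w : Fin m → ℤ) (hw0 : w ≠ 0) (hw : ‖lf p (F x) w‖ ≤ (p : ℝ) ^ (-(T : ℤ))) :
    ε * η ≤ m * ‖w‖ := by
  obtain ⟨D, -, hD, hD1, hD2⟩ := h
  have hz0 : zq w ≠ 0 := by
    intro h; apply hw0; ext i
    have := congrFun h i
    simpa [zq] using this
  obtain ⟨V0, hV0, hmax⟩ := Finset.exists_max_image (insert ⊥ (D.filter fun V => zq w ∉ V))
    (fun V : Submodule ℚ (Fin m → ℚ) => Module.finrank ℚ V) ⟨⊥, Finset.mem_insert_self _ _⟩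
  rw [Finset.mem_insert, Finset.mem_filter] at hV0
  have hwV : zq w ∉ V0 := by
    rcases hV0 with rfl | h
    · simpa using hz0
    · exact h.2
  have hψ0 : psi p T V0 (F x) ≤ η ^ Module.finrank ℚ V0 := by
    rcases hV0 with rfl | h
    · rw [finrank_bot, pow_zero]; exact psi_bot p T _
    · exact (hD1 V0 h.1 (by simp)).2
  have hcons := psi_cons p T V0 (F x) w hwV hw
  have hfr := Submodule.finrank_sup_span_singleton hwV
  have hwmem : zq w ∈ V0 ⊔ Submodule.span ℚ {zq w} :=
    Submodule.mem_sup_right (Submodule.mem_span_singleton_self _)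
  have hlow : ε * η ^ Module.finrank ℚ ↥(V0 ⊔ Submodule.span ℚ {zq w}) ≤
      psi p T (V0 ⊔ Submodule.span ℚ {zq w}) (F x) := by
    by_cases hVD : (V0 ⊔ Submodule.span ℚ {zq w}) ∈ D
    · exact (hD1 _ hVD (by simp)).1
    · refine le_trans (mul_le_of_le_one_left (by positivity) hε1) (hD2 _ ⟨?_, hVD, ?_⟩)
      · intro h; rw [h] at hwmem; exact hz0 (by simpa using hwmem)
      · intro W hW
        by_cases hwW : zq w ∈ W
        · left
          apply sup_le
          · rcases hV0 with rfl | h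
            · exact bot_le
            · rcases hD.2 V0 h.1 W hW with h1 | h1
              · exact h1
              · exact absurd (h1 hwW) hwV
          · rw [Submodule.span_singleton_le_iff_mem]; exact hwW
        · right
          have h2 := hmax W (by rw [Finset.mem_insert, Finset.mem_filter]; exact Or.inr ⟨hW, hwW⟩)
          refine le_trans ?_ le_sup_left
          rcases hV0 with rfl | h
          · rw [finrank_bot] at h2
            have := Submodule.finrank_eq_zero.1 (Nat.le_zero.1 h2)
            rw [this]
          · rcases hD.2 V0 h.1 W hW with h1 | h1
            · exact (Submodule.eq_of_le_of_finrank_le h1 h2).ge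
            · exact h1
  rw [hfr, pow_succ] at hlow
  have : (η ^ Module.finrank ℚ V0) * (ε * η) ≤ (η ^ Module.finrank ℚ V0) * (m * ‖w‖) := by
    calc _ = ε * (η ^ Module.finrank ℚ ↥V0 * η) := by ring
      _ ≤ _ := hlow
      _ ≤ _ := hcons
      _ ≤ m * ‖w‖ * η ^ Module.finrank ℚ V0 := by gcongr
      _ = _ := by ring
  exact le_of_mul_le_mul_left this (by positivity)



/-- power series evaluation -/
noncomputable def ev (p : ℕ) [Fact p.Prime] (c : ℕ → ℚ_[p]) (x : ℤ_[p]) : ℚ_[p] :=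
  ∑' k, c k * (x : ℚ_[p]) ^ k

theorem zp_norm_le (p : ℕ) [Fact p.Prime] (x : ℤ_[p]) : ‖(x : ℚ_[p])‖ ≤ 1 := x.2

theorem norm_mul_pow_le (p : ℕ) [Fact p.Prime] (c : ℚ_[p]) (x : ℤ_[p]) (k : ℕ) :
    ‖c * (x : ℚ_[p]) ^ k‖ ≤ ‖c‖ := by
  rw [norm_mul, norm_pow]
  exact mul_le_of_le_one_right (norm_nonneg _) (pow_le_one₀ (norm_nonneg _) (zp_norm_le p x))

theorem ev_summable (p : ℕ) [Fact p.Prime] (c : ℕ → ℚ_[p])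
    (hc : Filter.Tendsto c Filter.atTop (nhds 0)) (x : ℤ_[p]) :
    Summable fun k => c k * (x : ℚ_[p]) ^ k := by
  apply NonarchimedeanAddGroup.summable_of_tendsto_cofinite_zero
  rw [Nat.cofinite_eq_atTop]
  exact squeeze_zero_norm (fun k => norm_mul_pow_le p _ x k) (tendsto_zero_iff_norm_tendsto_zero.1 hc)

theorem ev_le (p : ℕ) [Fact p.Prime] (c : ℕ → ℚ_[p]) (M : ℝ) (h : ∀ k, ‖c k‖ ≤ M) (x : ℤ_[p]) :
    ‖ev p c x‖ ≤ M :=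
  IsUltrametricDist.norm_tsum_le_of_forall_le fun k => (norm_mul_pow_le p _ x k).trans (h k)

theorem ev_succ (p : ℕ) [Fact p.Prime] (c : ℕ → ℚ_[p])
    (hc : Filter.Tendsto c Filter.atTop (nhds 0)) (x : ℤ_[p]) :
    ev p c x = c 0 + x * ev p (fun k => c (k + 1)) x := by
  rw [ev, (ev_summable p c hc x).tsum_eq_zero_add, ev, ← tsum_mul_left]
  simp only [pow_zero, mul_one]
  congr 1
  apply tsum_congr
  intro k; ring

theorem tendsto_shift (p : ℕ) [Fact p.Prime] (c : ℕ → ℚ_[p])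
    (hc : Filter.Tendsto c Filter.atTop (nhds 0)) (j : ℕ) :
    Filter.Tendsto (fun k => c (k + j)) Filter.atTop (nhds 0) :=
  hc.comp (Filter.tendsto_add_atTop_nat j)

/-- quotient series -/
noncomputable def quo (p : ℕ) [Fact p.Prime] (c : ℕ → ℚ_[p]) (x0 : ℤ_[p]) (j : ℕ) : ℚ_[p] :=
  ev p (fun k => c (k + (j + 1))) x0

theorem quo_rec (p : ℕ) [Fact p.Prime] (c : ℕ → ℚ_[p])
    (hc : Filter.Tendsto c Filter.atTop (nhds 0)) (x0 : ℤ_[p]) (j : ℕ) :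
    quo p c x0 j = c (j + 1) + x0 * quo p c x0 (j + 1) := by
  rw [quo, ev_succ p _ (tendsto_shift p c hc (j+1)), quo]
  simp only [zero_add]
  congr 3
  ext k; congr 1; ring

theorem quo_tendsto (p : ℕ) [Fact p.Prime] (c : ℕ → ℚ_[p])
    (hc : Filter.Tendsto c Filter.atTop (nhds 0)) (x0 : ℤ_[p]) :
    Filter.Tendsto (quo p c x0) Filter.atTop (nhds 0) := by
  rw [Metric.tendsto_atTop] at hc ⊢
  intro ε hε
  obtain ⟨N, hN⟩ := hc (ε / 2) (by positivity)
  refine ⟨N, fun j hj => ?_⟩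
  rw [dist_zero_right]
  refine lt_of_le_of_lt (ev_le p _ (ε / 2) (fun k => ?_) x0) (by linarith)
  have := hN (k + (j + 1)) (by omega)
  rw [dist_zero_right] at this
  exact this.le

theorem quo_spec (p : ℕ) [Fact p.Prime] (c : ℕ → ℚ_[p])
    (hc : Filter.Tendsto c Filter.atTop (nhds 0)) (x0 x : ℤ_[p]) :
    ev p c x - ev p c x0 = (x - x0) * ev p (quo p c x0) x := by
  have hq := quo_tendsto p c hc x0
  have h1 := ev_succ p c hc x
  have h2 := ev_succ p c hc x0
  have h3 : ev p (quo p c x0) x = ev p (fun k => c (k + 1)) x + x0 * ev p (fun k => quo p c x0 (k + 1)) x := by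
    simp only [ev]
    rw [← tsum_mul_left, ← Summable.tsum_add]
    · apply tsum_congr
      intro k; rw [quo_rec p c hc]; ring
    · exact ev_summable p _ (tendsto_shift p c hc 1) x
    · exact (ev_summable p _ (tendsto_shift p _ hq 1) x).mul_left _
  have h4 := ev_succ p _ hq x
  have h5 : quo p c x0 0 = ev p (fun k => c (k + 1)) x0 := rfl
  rw [h1, h2, ← h5]
  linear_combination (x0:ℚ_[p]) * h4 - (x : ℚ_[p]) * h3

/-- dominated series -/
def Dom (p : ℕ) [Fact p.Prime] (c : ℕ → ℚ_[p]) (M : ℝ) (r : ℕ) : Prop :=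
  Filter.Tendsto c Filter.atTop (nhds 0) ∧ (∀ k, ‖c k‖ ≤ M) ∧ ‖c r‖ = M ∧ ∃ M' < M, ∀ k, r < k → ‖c k‖ ≤ M'

theorem Dom.quo {p : ℕ} [Fact p.Prime] {c : ℕ → ℚ_[p]} {M : ℝ} {r : ℕ} (h : Dom p c M (r + 1))
    (x0 : ℤ_[p]) : Dom p (quo p c x0) M r := by
  obtain ⟨hc, hM, hr, M', hM', hk⟩ := h
  have hge : ∀ k, r < k → ‖PadicDioph.quo p c x0 k‖ ≤ M' := fun k hk' =>
    ev_le p _ _ (fun i => hk _ (by omega)) x0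
  refine ⟨quo_tendsto p c hc x0, fun k => ev_le p _ _ (fun i => hM _) x0, ?_, M', hM', hge⟩
  rw [quo_rec p c hc]
  have h1 : ‖(x0 : ℚ_[p]) * PadicDioph.quo p c x0 (r + 1)‖ < M := by
    rw [norm_mul]
    refine lt_of_le_of_lt (mul_le_of_le_one_left (norm_nonneg _) (zp_norm_le p x0)) ?_
    exact (hge _ (by omega)).trans_lt hM'
  rw [IsUltrametricDist.norm_add_eq_max_of_norm_ne_norm (by rw [hr]; exact h1.ne'), hr, max_eq_left h1.le]

theorem Dom.zero {p : ℕ} [Fact p.Prime] {c : ℕ → ℚ_[p]} {M : ℝ} (h : Dom p c M 0)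
    (x : ℤ_[p]) : ‖ev p c x‖ = M := by
  obtain ⟨hc, hM, hr, M', hM', hk⟩ := h
  rw [ev_succ p c hc]
  have h1 : ‖(x : ℚ_[p]) * ev p (fun k => c (k + 1)) x‖ < M := by
    rw [norm_mul]
    refine lt_of_le_of_lt (mul_le_of_le_one_left (norm_nonneg _) (zp_norm_le p x)) ?_
    exact (ev_le p _ M' (fun k => hk _ (by omega)) x).trans_lt hM'
  rw [IsUltrametricDist.norm_add_eq_max_of_norm_ne_norm (by rw [hr]; exact h1.ne'), hr, max_eq_left h1.le]

open Classical in
theorem dom_claim (p : ℕ) [Fact p.Prime] (s l : ℕ) (x1 : ℤ_[p]) (r : ℕ) :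
    ∀ (c : ℕ → ℚ_[p]) (M : ℝ), Dom p c M r → ∀ (S : Set ℤ_[p]), S ⊆ pb p x1 l → ∀ τ : ℝ, 0 ≤ τ →
      (∀ x ∈ S, ‖ev p c x‖ ≤ τ) →
      (∃ Z : Finset ℤ_[p], Z.card ≤ r ∧ S ⊆ ⋃ z ∈ Z, pb p z (l + s)) ∨
        ∀ x ∈ pb p x1 l, ‖ev p c x‖ ≤ τ * ((p : ℝ) ^ s) ^ r := by
  have hp1 : (1 : ℝ) ≤ p := by exact_mod_cast (Fact.out : p.Prime).one_lt.le
  have hp0 : (0 : ℝ) < p := by linarith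
  induction r with
  | zero =>
    intro c M h S hS τ hτ hSτ
    rcases S.eq_empty_or_nonempty with rfl | ⟨x0, hx0⟩
    · left; exact ⟨∅, by simp⟩
    · right; intro x _
      rw [h.zero, ← h.zero x0]
      simpa using hSτ x0 hx0
  | succ r ih =>
    intro c M h S hS τ hτ hSτ
    rcases S.eq_empty_or_nonempty with rfl | ⟨x0, hx0⟩
    · left; exact ⟨∅, by simp⟩
    rcases ih (quo p c x0) M (h.quo x0) (S \ pb p x0 (l + s)) (Set.sdiff_subset.trans hS)
      (τ * (p : ℝ) ^ (l + s)) (by positivity) (by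
        rintro x ⟨hx, hx'⟩
        simp only [pb, Set.mem_ofPred_eq, not_le] at hx'
        have h1 := quo_spec p c h.1 x0 x
        have h2 : ‖ev p c x - ev p c x0‖ ≤ τ := by
          rw [sub_eq_add_neg]
          refine (IsUltrametricDist.norm_add_le_max _ _).trans (max_le (hSτ x hx) ?_)
          rw [norm_neg]; exact hSτ x0 hx0
        rw [h1, norm_mul] at h2
        have h3 : ‖(x : ℚ_[p]) - x0‖ = ‖x - x0‖ := by rw [PadicInt.norm_def]; simp
        rw [h3] at h2
        rw [zpow_neg, zpow_natCast] at hx'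
        have h4 : ((p : ℝ) ^ (l + s))⁻¹ * ‖ev p (quo p c x0) x‖ ≤ τ :=
          le_trans (by gcongr) h2
        rwa [inv_mul_le_iff₀ (by positivity), mul_comm] at h4) with ⟨Z, hZ, hSZ⟩ | h2
    · left
      refine ⟨insert x0 Z, (Finset.card_insert_le _ _).trans (by omega), ?_⟩
      intro x hx
      by_cases hx' : x ∈ pb p x0 (l + s)
      · simp only [Set.mem_iUnion]; exact ⟨x0, Finset.mem_insert_self _ _, hx'⟩
      · have := hSZ ⟨hx, hx'⟩
        simp only [Set.mem_iUnion] at this ⊢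
        obtain ⟨z, hz, h⟩ := this
        exact ⟨z, Finset.mem_insert_of_mem hz, h⟩
    · right
      intro x hx
      have h1 := quo_spec p c h.1 x0 x
      have e : ev p c x = (x - x0) * ev p (quo p c x0) x + ev p c x0 := by rw [← h1]; ring
      rw [e]
      refine (IsUltrametricDist.norm_add_le_max _ _).trans (max_le ?_ ?_)
      · have h3 : ‖(x : ℚ_[p]) - x0‖ = ‖x - x0‖ := by rw [PadicInt.norm_def]; simp
        have h4 : ‖x - x0‖ ≤ (p : ℝ) ^ (-(l : ℤ)) := by
          have hx0' := hS hx0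
          simp only [pb, Set.mem_ofPred_eq] at hx hx0'
          have : x - x0 = (x - x1) + -(x0 - x1) := by ring
          rw [this]
          refine (IsUltrametricDist.norm_add_le_max _ _).trans (max_le hx ?_)
          rw [norm_neg]; exact hx0'
        rw [norm_mul, h3]
        calc _ ≤ (p : ℝ) ^ (-(l : ℤ)) * (τ * (p : ℝ) ^ (l + s) * ((p : ℝ) ^ s) ^ r) := by
              gcongr
              exact h2 x hx
          _ = _ := by
              rw [zpow_neg, zpow_natCast]; field_simp; ring
      · calc _ ≤ τ * 1 := by rw [mul_one]; exact hSτ x0 hx0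
          _ ≤ _ := by gcongr; exact one_le_pow₀ (one_le_pow₀ hp1)

theorem pb_pow (p : ℕ) [Fact p.Prime] (ν : Measure ℤ_[p])
    (hν : ∀ a b l, ν (pb p a l) = p * ν (pb p b (l + 1))) (a b : ℤ_[p]) (l s : ℕ) (hs : 0 < s) :
    ν (pb p a l) = p ^ s * ν (pb p b (l + s)) := by
  induction s generalizing b with
  | zero => omega
  | succ s ih =>
    rcases Nat.eq_zero_or_pos s with rfl | h
    · simpa using hν a b l
    · rw [ih b h, hν b b (l + s), pow_succ, mul_assoc, add_assoc]

theorem dom_good (p : ℕ) [Fact p.Prime] (ν : Measure ℤ_[p])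
    (hν : ∀ a b l, ν (pb p a l) = p * ν (pb p b (l + 1))) (s D l : ℕ) (hs : 0 < s) (x1 a : ℤ_[p])
    (hx1 : x1 ∈ pb p a l)
    (c : ℕ → ℚ_[p]) (hc : (∀ k, c k = 0) ∨ ∃ M, ∃ r ≤ D, Dom p c M r) :
    ν {x | x ∈ pb p a l ∧ ‖ev p c x‖ < ((p : ℝ) ^ (s * D + 1))⁻¹ * ‖ev p c x1‖} ≤
      (D * ((p : ℝ≥0∞) ^ s)⁻¹) * ν (pb p a l) := by
  have hp1 : (1 : ℝ) < p := by exact_mod_cast (Fact.out : p.Prime).one_lt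
  have hp0 : (0 : ℝ) < p := by linarith
  rcases hc with hc | ⟨M, r, hr, hD⟩
  · have : ∀ x, ev p c x = 0 := fun x => by simp [ev, hc]
    simp [this]
  rcases dom_claim p s l a r c M hD _ (fun x hx => hx.1 : {x | x ∈ pb p a l ∧ ‖ev p c x‖ < ((p : ℝ) ^ (s * D + 1))⁻¹ * ‖ev p c x1‖} ⊆ _)
    (((p : ℝ) ^ (s * D + 1))⁻¹ * ‖ev p c x1‖) (by positivity) (fun x hx => hx.2.le) with ⟨Z, hZ, hSZ⟩ | h
  · calc _ ≤ _ := measure_mono hSZ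
      _ ≤ _ := measure_biUnion_finset_le _ _
      _ = ∑ z ∈ Z, ((p : ℝ≥0∞) ^ s)⁻¹ * ν (pb p a l) := by
        apply Finset.sum_congr rfl
        intro z _
        rw [pb_pow p ν hν a z l s hs, ← mul_assoc, ENNReal.inv_mul_cancel, one_mul]
        · exact pow_ne_zero _ (by exact_mod_cast (Fact.out : p.Prime).ne_zero)
        · finiteness
      _ = Z.card * (((p : ℝ≥0∞) ^ s)⁻¹ * ν (pb p a l)) := by simp
      _ ≤ D * (((p : ℝ≥0∞) ^ s)⁻¹ * ν (pb p a l)) := by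
        gcongr; exact hZ.trans hr
      _ = _ := by ring
  · have h1 := h x1 hx1
    have h0 : ‖ev p c x1‖ = 0 := by
      by_contra hne
      have hpos : 0 < ‖ev p c x1‖ := lt_of_le_of_ne (norm_nonneg _) (Ne.symm hne)
      have h2 : ((p : ℝ) ^ s) ^ r < (p : ℝ) ^ (s * D + 1) := by
        rw [← pow_mul]
        apply pow_lt_pow_right₀ hp1
        have := Nat.mul_le_mul_left s hr
        omega
      have h3 : ((p : ℝ) ^ (s * D + 1))⁻¹ * ((p : ℝ) ^ s) ^ r < 1 := by
        rwa [inv_mul_lt_iff₀ (by positivity), mul_one]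
      nlinarith
    have : {x | x ∈ pb p a l ∧ ‖ev p c x‖ < ((p : ℝ) ^ (s * D + 1))⁻¹ * ‖ev p c x1‖} = ∅ := by
      rw [Set.eq_empty_iff_forall_notMem]
      rintro x ⟨_, hx⟩
      rw [h0, mul_zero] at hx
      exact absurd hx (not_lt.2 (norm_nonneg _))
    rw [this]; simp


theorem dom_of_bound (p : ℕ) [Fact p.Prime] (c : ℕ → ℚ_[p]) (hc : Filter.Tendsto c Filter.atTop (nhds 0))
    (D : ℕ) (k0 : ℕ) (hk0 : k0 ≤ D) (h : ∀ k, D < k → ‖c k‖ < ‖c k0‖) : ∃ M, ∃ r ≤ D, Dom p c M r := by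
  classical
  obtain ⟨k1, hk1, hmax⟩ := Finset.exists_max_image (Finset.range (D + 1)) (fun k => ‖c k‖) ⟨0, by simp⟩
  rw [Finset.mem_range] at hk1
  let S := (Finset.range (D + 1)).filter (fun k => ‖c k‖ = ‖c k1‖)
  have hS : S.Nonempty := ⟨k1, by simp [S]; omega⟩
  have hr := Finset.max'_mem S hS
  set r := S.max' hS with hrdef
  simp only [S, Finset.mem_filter, Finset.mem_range] at hr
  have hall : ∀ k, ‖c k‖ ≤ ‖c k1‖ := by
    intro k
    by_cases hk : k ≤ D
    · exact hmax k (by simp; omega)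
    · exact (h k (by omega)).le.trans (hmax k0 (by simp; omega))
  have hlt : ∀ k, r < k → ‖c k‖ < ‖c k1‖ := by
    intro k hk
    by_cases hkD : k ≤ D
    · refine lt_of_le_of_ne (hall k) fun e => ?_
      have := Finset.le_max' S k (by simp [S, e]; omega)
      omega
    · exact (h k (by omega)).trans_le (hmax k0 (by simp; omega))
  refine ⟨‖c k1‖, r, by omega, hc, hall, hr.2, ?_⟩
  have hpos : 0 < ‖c k1‖ := (norm_nonneg _).trans_lt (hlt (r+1) (by omega))
  rw [Metric.tendsto_atTop] at hc
  obtain ⟨N, hN⟩ := hc (‖c k1‖ / 2) (by positivity)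
  obtain ⟨k2, hk2, hmax2⟩ := Finset.exists_max_image (Finset.Icc (r + 1) (r + 1 + N)) (fun k => ‖c k‖)
    ⟨r + 1, by simp⟩
  simp only [Finset.mem_Icc] at hk2 hmax2
  refine ⟨max (‖c k2‖) (‖c k1‖ / 2), max_lt (hlt k2 (by omega)) (by linarith), fun k hk => ?_⟩
  by_cases hkN : k ≤ r + 1 + N
  · exact le_max_of_le_left (hmax2 k ⟨by omega, hkN⟩)
  · have := hN k (by omega)
    rw [dist_zero_right] at this
    exact le_max_of_le_right this.le

/-- combined coefficients -/
noncomputable def ca (p : ℕ) [Fact p.Prime] {m : ℕ} (c : Fin m → ℕ → ℚ_[p]) (k : ℕ) :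
    (Fin m → ℚ_[p]) →ₗ[ℚ_[p]] ℚ_[p] :=
  ∑ i, (c i k) • LinearMap.proj i

theorem ca_apply (p : ℕ) [Fact p.Prime] {m : ℕ} (c : Fin m → ℕ → ℚ_[p]) (k : ℕ) (a : Fin m → ℚ_[p]) :
    ca p c k a = ∑ i, a i * c i k := by
  simp [ca, mul_comm]

theorem ca_tendsto (p : ℕ) [Fact p.Prime] {m : ℕ} (c : Fin m → ℕ → ℚ_[p])
    (hc : ∀ i, Filter.Tendsto (c i) Filter.atTop (nhds 0)) (a : Fin m → ℚ_[p]) :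
    Filter.Tendsto (fun k => ca p c k a) Filter.atTop (nhds 0) := by
  simp only [ca_apply]
  have : (0 : ℚ_[p]) = ∑ i, a i * 0 := by simp
  rw [this]
  exact tendsto_finsetSum _ fun i _ => (hc i).const_mul _

theorem exists_dom (p : ℕ) [Fact p.Prime] {m : ℕ} (c : Fin m → ℕ → ℚ_[p])
    (hc : ∀ i, Filter.Tendsto (c i) Filter.atTop (nhds 0)) :
    ∃ D : ℕ, ∀ a : Fin m → ℚ_[p], (∀ k, ca p c k a = 0) ∨
      ∃ M, ∃ r ≤ D, Dom p (fun k => ca p c k a) M r := by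
  let K : ℕ →o (Submodule ℚ_[p] (Fin m → ℚ_[p]))ᵒᵈ :=
    { toFun := fun D => OrderDual.toDual (⨅ k ∈ Finset.range D, LinearMap.ker (ca p c k))
      monotone' := fun D D' h => by
        rw [OrderDual.toDual_le_toDual]
        apply biInf_mono
        intro k; simp only [Finset.mem_range]; omega }
  obtain ⟨D0, hD0⟩ := IsArtinian.monotone_stabilizes K
  have hK : ∀ a, (∀ k < D0, ca p c k a = 0) → ∀ k, ca p c k a = 0 := by
    intro a ha k
    have h1 : a ∈ (⨅ k ∈ Finset.range D0, LinearMap.ker (ca p c k)) := by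
      simpa [Submodule.mem_iInf] using ha
    have h2 : (⨅ k ∈ Finset.range D0, LinearMap.ker (ca p c k)) =
        (⨅ k' ∈ Finset.range (D0 + k + 1), LinearMap.ker (ca p c k')) :=
      hD0 (D0 + k + 1) (by omega)
    rw [h2] at h1
    simp only [Submodule.mem_iInf, Finset.mem_range, LinearMap.mem_ker] at h1
    exact h1 k (by omega)
  obtain ⟨Q, hQ⟩ := Submodule.exists_isCompl (⨅ k ∈ Finset.range D0, LinearMap.ker (ca p c k))
  let L : (Fin m → ℚ_[p]) →ₗ[ℚ_[p]] (Fin D0 → ℚ_[p]) := LinearMap.pi fun k => ca p c k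
  have hL : LinearMap.ker (L.domRestrict Q) = ⊥ := by
    rw [LinearMap.ker_eq_bot']
    intro u hu
    have h1 : (u : Fin m → ℚ_[p]) ∈ (⨅ k ∈ Finset.range D0, LinearMap.ker (ca p c k)) := by
      simp only [Submodule.mem_iInf, Finset.mem_range, LinearMap.mem_ker]
      intro k hk
      exact congrFun hu ⟨k, hk⟩
    have h2 := Submodule.disjoint_def.1 hQ.disjoint _ h1 u.2
    exact Subtype.ext h2
  obtain ⟨C, hC, hCL⟩ := LinearMap.exists_antilipschitzWith _ hL
  have hC' : (0 : ℝ) < C := hC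
  have hbig : ∃ D1, ∀ k, D1 ≤ k → ∀ i, ‖c i k‖ ≤ (2 * (C : ℝ))⁻¹ := by
    have h1 : ∀ i, ∃ D1, ∀ k, D1 ≤ k → ‖c i k‖ ≤ (2 * (C : ℝ))⁻¹ := by
      intro i
      have := hc i
      rw [Metric.tendsto_atTop] at this
      obtain ⟨N, hN⟩ := this ((2 * (C : ℝ))⁻¹) (by positivity)
      refine ⟨N, fun k hk => ?_⟩
      have := hN k hk
      rw [dist_zero_right] at this
      exact this.le
    choose D1 hD1 using h1
    exact ⟨Finset.univ.sup D1, fun k hk i => hD1 i k ((Finset.le_sup (Finset.mem_univ i)).trans hk)⟩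
  obtain ⟨D1, hD1⟩ := hbig
  refine ⟨D0 + D1, fun a => ?_⟩
  by_cases ha : ∀ k, ca p c k a = 0
  · exact Or.inl ha
  right
  obtain ⟨a0, ha0, u, hu, rfl⟩ := Submodule.mem_sup.1 (hQ.codisjoint.eq_top.symm ▸ Submodule.mem_top :
    a ∈ (⨅ k ∈ Finset.range D0, LinearMap.ker (ca p c k)) ⊔ Q)
  have ha0' : ∀ k, ca p c k a0 = 0 := by
    apply hK
    simpa [Submodule.mem_iInf] using ha0
  have hau : ∀ k, ca p c k (a0 + u) = ca p c k u := fun k => by rw [map_add, ha0', zero_add]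
  have hune : u ≠ 0 := by
    rintro rfl
    exact ha fun k => by rw [hau, map_zero]
  have hupos : 0 < ‖u‖ := norm_pos_iff.2 hune
  have h1 : ‖u‖ ≤ C * ‖L u‖ := by
    have := hCL.le_mul_norm (map_zero _) ⟨u, hu⟩
    simpa using this
  have hLpos : 0 < ‖L u‖ := by
    by_contra h
    nlinarith [norm_nonneg (L u)]
  have hne : Nonempty (Fin D0) := by
    by_contra hne
    rw [not_nonempty_iff] at hne
    have : L u = 0 := by ext i; exact hne.elim i
    rw [this] at hLpos; simp at hLpos
  obtain ⟨i0, -, hi0⟩ := Finset.exists_max_image Finset.univ (fun i => ‖L u i‖) Finset.univ_nonempty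
  have h2 : ‖L u‖ ≤ ‖L u i0‖ := by
    rw [pi_norm_le_iff_of_nonneg (norm_nonneg _)]
    intro k; exact hi0 k (Finset.mem_univ _)
  refine dom_of_bound p _ (ca_tendsto p c hc _) (D0 + D1) i0 (by omega) ?_
  intro k hk
  simp only [hau]
  have h3 : ‖ca p c k u‖ ≤ ‖u‖ * (2 * (C : ℝ))⁻¹ := by
    rw [ca_apply]
    apply IsUltrametricDist.norm_sum_le_of_forall_le_of_nonneg (by positivity)
    intro i _
    rw [norm_mul]
    gcongr
    · exact norm_le_pi_norm u i
    · exact hD1 k (by omega) i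
  have h4 : ‖L u i0‖ = ‖ca p c i0 u‖ := rfl
  rw [← h4]
  refine lt_of_lt_of_le ?_ h2
  calc _ ≤ _ := h3
    _ ≤ C * ‖L u‖ * (2 * (C : ℝ))⁻¹ := by gcongr
    _ = ‖L u‖ / 2 := by field_simp
    _ < _ := by linarith

/-- the curve -/
noncomputable def crv (p : ℕ) [Fact p.Prime] {m : ℕ} (c : Fin m → ℕ → ℚ_[p]) (x : ℤ_[p]) : Fin m → ℚ_[p] :=
  fun i => ev p (c i) x

theorem lf_crv (p : ℕ) [Fact p.Prime] {m : ℕ} (c : Fin m → ℕ → ℚ_[p])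
    (hc : ∀ i, Filter.Tendsto (c i) Filter.atTop (nhds 0)) (q : Fin m → ℤ) (x : ℤ_[p]) :
    lf p (crv p c x) q = ev p (fun k => ca p c k (fun i => (q i : ℚ_[p]))) x := by
  simp only [lf, crv, ev, ca_apply, Finset.sum_mul, ← tsum_mul_left]
  rw [Summable.tsum_finsetSum]
  · refine Finset.sum_congr rfl fun i _ => tsum_congr fun k => by ring
  · intro i _
    refine ((ev_summable p (c i) (hc i) x).mul_left (q i : ℚ_[p])).congr fun k => by ring

theorem lf_crv_lip (p : ℕ) [Fact p.Prime] {m : ℕ} (c : Fin m → ℕ → ℚ_[p])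
    (hc : ∀ i, Filter.Tendsto (c i) Filter.atTop (nhds 0)) :
    ∃ m0 : ℕ, ∀ q x x', ‖lf p (crv p c x) q - lf p (crv p c x') q‖ ≤ (p : ℝ) ^ m0 * ‖x - x'‖ := by
  have hp1 : (1 : ℝ) < p := by exact_mod_cast (Fact.out : p.Prime).one_lt
  have h1 : ∀ i, ∃ C, ∀ k, ‖c i k‖ ≤ C := by
    intro i
    obtain ⟨C, hC⟩ := (Metric.isBounded_range_of_tendsto _ (hc i)).exists_norm_le
    exact ⟨C, fun k => hC _ ⟨k, rfl⟩⟩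
  choose C hC using h1
  obtain ⟨m0, hm0⟩ := pow_unbounded_of_one_lt (∑ i, |C i|) hp1
  refine ⟨m0, fun q x x' => ?_⟩
  rw [lf_crv p c hc, lf_crv p c hc, quo_spec p _ (ca_tendsto p c hc _), norm_mul, mul_comm]
  have h3 : ‖(x : ℚ_[p]) - x'‖ = ‖x - x'‖ := by rw [PadicInt.norm_def]; simp
  rw [h3]
  gcongr
  apply ev_le
  intro k
  apply ev_le
  intro k
  beta_reduce
  rw [ca_apply]
  apply IsUltrametricDist.norm_sum_le_of_forall_le_of_nonneg (by positivity)
  intro i _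
  rw [norm_mul]
  calc _ ≤ 1 * |C i| := by
        gcongr
        · exact Padic.norm_int_le_one _
        · exact (hC _ _).trans (le_abs_self _)
    _ ≤ ∑ i, |C i| := by
        rw [one_mul]
        exact Finset.single_le_sum (f := fun i => |C i|) (fun i _ => abs_nonneg _) (Finset.mem_univ i)
    _ ≤ _ := hm0.le


theorem quant (p : ℕ) [Fact p.Prime] (ν : Measure ℤ_[p])
    (hν : ∀ a b l, ν (pb p a l) = p * ν (pb p b (l + 1))) {m : ℕ} (hm : 0 < m)
    (c : Fin m → ℕ → ℚ_[p])
    (hc : ∀ i, Filter.Tendsto (c i) Filter.atTop (nhds 0)) :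
    ∃ D : ℕ, ∀ (T : ℕ) (η : ℝ) (s : ℕ), 0 < s → 0 < η →
      (∀ q : Fin m → ℤ, q ≠ 0 → ‖lf p (crv p c 0) q‖ ≤ (p : ℝ) ^ (-(T : ℤ)) → η ≤ ‖q‖) →
      ν {x | ∃ w : Fin m → ℤ, w ≠ 0 ∧ ‖lf p (crv p c x) w‖ ≤ (p : ℝ) ^ (-(T : ℤ)) ∧
        m * ‖w‖ < ((p : ℝ) ^ (s * D + 1))⁻¹ * (η / m)} ≤
        KK p m * (D * ((p : ℝ≥0∞) ^ s)⁻¹) * ν Set.univ := by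
  classical
  have hp1 : (1 : ℝ) < p := by exact_mod_cast (Fact.out : p.Prime).one_lt
  have hp0 : (0 : ℝ) < p := by linarith
  obtain ⟨D, hD⟩ := exists_dom p c hc
  obtain ⟨m0, hm0⟩ := lf_crv_lip p c hc
  refine ⟨D, fun T η s hs hη h => ?_⟩
  set ε : ℝ := ((p : ℝ) ^ (s * D + 1))⁻¹ with hε
  have hεpos : 0 < ε := by positivity
  have hε1 : ε ≤ 1 := inv_le_one_of_one_le₀ (one_le_pow₀ hp1.le)
  have hmpos : (0 : ℝ) < m := by exact_mod_cast hm
  have huniv : pb p (0 : ℤ_[p]) 0 = Set.univ := by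
    ext x; simp [pb, PadicInt.norm_le_one]
  have key := tree (m := m) p ν hν (fun V x => psi p T V (crv p c x)) (fun V => (η / m) ^ Module.finrank ℚ V)
    ε (D * ((p : ℝ≥0∞) ^ s)⁻¹) (T + m0) ?_ ?_ m ∅ ⟨by simp, by simp⟩ (by simp) (T + m0) 0 0 (by simp) ?_
  · rw [huniv] at key
    refine le_trans (measure_mono ?_) key
    rintro x ⟨w, hw0, hw, hw2⟩
    refine ⟨Set.mem_univ _, fun hM => ?_⟩
    have := mrk_short p (crv p c) T (η / m) ε (by positivity) hεpos hε1 x hM w hw0 hw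
    linarith
  · intro V a l x1 hx1 hρ
    obtain ⟨q, hq⟩ := psi_good p T V (crv p c x1) _ ε hεpos hε1 hρ
    refine le_trans (measure_mono ?_) (dom_good p ν hν s D l hs x1 a hx1
      (fun k => ca p c k (fun i => (q i : ℚ_[p]))) (hD _))
    rintro x ⟨hx, hx2⟩
    refine ⟨hx, ?_⟩
    have := hq _ hx2
    rwa [lf_crv p c hc, lf_crv p c hc] at this
  · intro V a x x' hx hx'
    apply psi_const
    intro q
    refine (hm0 q x x').trans ?_
    simp only [pb, Set.mem_ofPred_eq] at hx hx'
    have h1 : ‖x - x'‖ ≤ (p : ℝ) ^ (-((T + m0 : ℕ) : ℤ)) := by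
      have : x - x' = (x - a) + -(x' - a) := by ring
      rw [this]
      refine (IsUltrametricDist.norm_add_le_max _ _).trans (max_le hx ?_)
      rw [norm_neg]; exact hx'
    calc _ ≤ (p : ℝ) ^ m0 * (p : ℝ) ^ (-((T + m0 : ℕ) : ℤ)) := by gcongr
      _ = _ := by
        rw [zpow_neg, zpow_neg, zpow_natCast, zpow_natCast]; field_simp; ring
  · intro V hV
    refine ⟨0, by rw [huniv]; trivial, psi_minkowski p T V _ η hη.le h⟩

/-- solution set -/
def Sol (p : ℕ) [Fact p.Prime] {m : ℕ} (y : Fin m → ℚ_[p]) (u : ℝ) : Set (Fin m → ℤ) :=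
  {q | ‖lf p y q‖ ≤ ‖q‖ ^ (-u)}

theorem one_le_norm {m : ℕ} (q : Fin m → ℤ) (hq : q ≠ 0) : 1 ≤ ‖q‖ := by
  obtain ⟨i, hi⟩ := Function.ne_iff.1 hq
  refine le_trans ?_ (norm_le_pi_norm q i)
  rw [Int.norm_eq_abs]
  exact_mod_cast Int.one_le_abs hi

theorem sol_low (p : ℕ) [Fact p.Prime] {m : ℕ} (y : Fin m → ℚ_[p]) (v : ℝ) (hv : 0 < v)
    (h : (Sol p y v).Finite) : ∃ T0 : ℕ, ∀ T, T0 ≤ T → ∀ q : Fin m → ℤ, q ≠ 0 →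
      ‖lf p y q‖ ≤ (p : ℝ) ^ (-(T : ℤ)) → ((p : ℝ) ^ T) ^ (1 / v) ≤ ‖q‖ := by
  have hp1 : (1 : ℝ) < p := by exact_mod_cast (Fact.out : p.Prime).one_lt
  have hp0 : (0 : ℝ) < p := by linarith
  have hne : ∀ q ∈ Sol p y v, q ≠ 0 → lf p y q ≠ 0 := by
    intro q hq hq0 hl
    apply Set.infinite_of_injective_forall_mem (f := fun k : ℤ => k • q) ?_ ?_ h
    · intro k k' hkk
      exact smul_left_injective ℤ hq0 hkk
    · intro k
      simp only [Sol, Set.mem_ofPred_eq]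
      rw [lf_smul, hl, mul_zero, norm_zero]
      positivity
  have hex : ∀ q : Fin m → ℤ, ∃ T0 : ℕ, q ∈ Sol p y v → q ≠ 0 → (p : ℝ) ^ (-(T0 : ℤ)) < ‖lf p y q‖ := by
    intro q
    by_cases hq : q ∈ Sol p y v ∧ q ≠ 0
    · obtain ⟨T0, hT0⟩ := exists_pow_lt_of_lt_one (norm_pos_iff.2 (hne q hq.1 hq.2)) (inv_lt_one_of_one_lt₀ hp1)
      refine ⟨T0, fun _ _ => ?_⟩
      rwa [zpow_neg, zpow_natCast, ← inv_pow]
    · exact ⟨0, fun h1 h2 => absurd ⟨h1, h2⟩ hq⟩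
  choose t ht using hex
  refine ⟨h.toFinset.sup t, fun T hT q hq0 hq => ?_⟩
  have hns : q ∉ Sol p y v := by
    intro hqs
    have h1 := ht q hqs hq0
    have h2 : t q ≤ T := (Finset.le_sup (h.mem_toFinset.2 hqs)).trans hT
    have h3 : (p : ℝ) ^ (-(T : ℤ)) ≤ (p : ℝ) ^ (-(t q : ℤ)) := zpow_le_zpow_right₀ hp1.le (by omega)
    linarith
  simp only [Sol, Set.mem_ofPred_eq, not_le] at hns
  have hpos : 0 < ‖q‖ := norm_pos_iff.2 hq0
  have h4 : ‖q‖ ^ (-v) < (p : ℝ) ^ (-(T : ℤ)) := hns.trans_le hq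
  rw [Real.rpow_neg hpos.le, zpow_neg, zpow_natCast, inv_lt_inv₀ (by positivity) (by positivity)] at h4
  calc ((p : ℝ) ^ T) ^ (1 / v) ≤ (‖q‖ ^ v) ^ (1 / v) := by gcongr
    _ = ‖q‖ := by rw [← Real.rpow_mul hpos.le, mul_one_div_cancel hv.ne', Real.rpow_one]

theorem oneD_aux (p : ℕ) [Fact p.Prime] (ν : Measure ℤ_[p]) [IsFiniteMeasure ν]
    (hν : ∀ a b l, ν (pb p a l) = p * ν (pb p b (l + 1))) {m : ℕ} (hm : 0 < m)
    (c : Fin m → ℕ → ℚ_[p])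
    (hc : ∀ i, Filter.Tendsto (c i) Filter.atTop (nhds 0)) (v v2 : ℝ) (hv : 0 < v) (hv2 : v < v2)
    (h : (Sol p (crv p c 0) v).Finite) : ∀ᵐ x ∂ν, (Sol p (crv p c x) v2).Finite := by
  have hp1 : (1 : ℝ) < p := by exact_mod_cast (Fact.out : p.Prime).one_lt
  have hp0 : (0 : ℝ) < p := by linarith
  have hmpos : (0 : ℝ) < m := by exact_mod_cast hm
  have hv20 : 0 < v2 := hv.trans hv2
  obtain ⟨D, hD⟩ := quant p ν hν hm c hc
  obtain ⟨T0, hT0⟩ := sol_low p _ v hv h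
  have hgap : 0 < 1 / v - 1 / v2 := sub_pos.2 (one_div_lt_one_div_of_lt hv hv2)
  obtain ⟨N0, hN0⟩ := exists_nat_gt (((D : ℝ) + 1) / (1 / v - 1 / v2))
  have hN0' : (D : ℝ) + 1 ≤ N0 * (1 / v - 1 / v2) := by
    rw [div_lt_iff₀ hgap] at hN0; exact hN0.le
  have hN0pos : 0 < N0 := by
    rcases Nat.eq_zero_or_pos N0 with h0 | h0
    · rw [h0] at hN0'; simp at hN0'; linarith [(Nat.cast_nonneg D : (0 : ℝ) ≤ D)]
    · exact h0
  let bad : ℕ → Set ℤ_[p] := fun s => {x | ∃ w : Fin m → ℤ, w ≠ 0 ∧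
    ‖lf p (crv p c x) w‖ ≤ (p : ℝ) ^ (-((N0 * s : ℕ) : ℤ)) ∧
        m * ‖w‖ < ((p : ℝ) ^ (s * D + 1))⁻¹ * (((p : ℝ) ^ (N0 * s)) ^ (1 / v) / m)}
  have hbad : ∀ s, ν (bad (s + (T0 + 1))) ≤ KK p m * (D * ((p : ℝ≥0∞)⁻¹ ^ s)) * ν Set.univ := by
    intro s
    refine (hD (N0 * (s + (T0 + 1))) (((p : ℝ) ^ (N0 * (s + (T0 + 1)))) ^ (1 / v)) (s + (T0 + 1)) (by omega)
      (by positivity) (fun q hq0 hq => hT0 _ ?_ q hq0 hq)).trans ?_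
    · nlinarith
    · gcongr
      rw [← ENNReal.inv_pow]
      exact ENNReal.inv_le_inv.2 (pow_le_pow_right₀ (by exact_mod_cast hp1.le) (by omega))
  have hsum : ∑' s, ν (bad (s + (T0 + 1))) ≠ ∞ := by
    refine ne_top_of_le_ne_top ?_ (ENNReal.tsum_le_tsum hbad)
    rw [ENNReal.tsum_mul_right, ENNReal.tsum_mul_left, ENNReal.tsum_mul_left, ENNReal.tsum_geometric]
    have h1 : (1 - (p : ℝ≥0∞)⁻¹)⁻¹ ≠ ∞ := by
      rw [Ne, ENNReal.inv_eq_top, tsub_eq_zero_iff_le, not_le]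
      rw [ENNReal.inv_lt_one]
      exact_mod_cast hp1
    have h2 := KK_ne_top p m
    finiteness
  filter_upwards [ae_eventually_notMem hsum] with x hx
  rw [Filter.eventually_atTop] at hx
  obtain ⟨s0, hs0⟩ := hx
  have hx' : ∀ s, s0 + (T0 + 1) ≤ s → ∀ w : Fin m → ℤ, w ≠ 0 →
    ‖lf p (crv p c x) w‖ ≤ (p : ℝ) ^ (-((N0 * s : ℕ) : ℤ)) →
        ((p : ℝ) ^ (s * D + 1))⁻¹ * (((p : ℝ) ^ (N0 * s)) ^ (1 / v) / m) ≤ m * ‖w‖ := by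
    intro s hs w hw0 hw
    by_contra hcon
    push Not at hcon
    have := hs0 (s - (T0 + 1)) (by omega)
    rw [Nat.sub_add_cancel (by omega)] at this
    exact this ⟨w, hw0, hw, hcon⟩
  set B : ℝ := ((p : ℝ) ^ N0) ^ (1 / v2) with hB
  have hBpos : 0 < B := by positivity
  obtain ⟨s2, hs2⟩ := pow_unbounded_of_one_lt ((m : ℝ) ^ 2 * p * B) hp1
  have hbd : Sol p (crv p c x) v2 ⊆ Metric.closedBall 0
      ((((p : ℝ) ^ N0) ^ (s0 + (T0 + 1) + s2 + 1)) ^ (1 / v2)) := by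
    intro q hq
    rw [mem_closedBall, dist_zero_right]
    rcases eq_or_ne q 0 with rfl | hq0
    · rw [norm_zero]; positivity
    simp only [Sol, Set.mem_ofPred_eq] at hq
    have hq1 := one_le_norm q hq0
    have hqpos : 0 < ‖q‖ := by linarith
    obtain ⟨s, hs1, hs3⟩ := exists_nat_pow_near (Real.one_le_rpow hq1 hv20.le)
      (one_lt_pow₀ hp1 hN0pos.ne' : 1 < (p : ℝ) ^ N0)
    have hqB : ‖q‖ ≤ (((p : ℝ) ^ N0) ^ (s + 1)) ^ (1 / v2) := by
      calc ‖q‖ = (‖q‖ ^ v2) ^ (1 / v2) := by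
            rw [← Real.rpow_mul hqpos.le, mul_one_div_cancel hv20.ne', Real.rpow_one]
        _ ≤ _ := by gcongr
    refine hqB.trans ?_
    suffices hs : s ≤ s0 + (T0 + 1) + s2 by
      gcongr
      exact one_le_pow₀ hp1.le
    by_contra hcon
    push Not at hcon
    have h1 := hx' s (by omega) q hq0 (by
      refine hq.trans ?_
      rw [Real.rpow_neg hqpos.le, zpow_neg, zpow_natCast, pow_mul]
      exact inv_anti₀ (by positivity) hs1)
    rw [pow_mul, ← Real.rpow_pow_comm (by positivity)] at h1
    rw [← Real.rpow_pow_comm (by positivity), ← hB] at hqB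
    set A : ℝ := ((p : ℝ) ^ N0) ^ (1 / v) with hA
    have hAB : B * (p : ℝ) ^ (D + 1) ≤ A := by
      have e1 : A = (p : ℝ) ^ (N0 * (1 / v - 1 / v2)) * B := by
        rw [hA, hB, ← Real.rpow_natCast, ← Real.rpow_mul hp0.le, ← Real.rpow_mul hp0.le,
          ← Real.rpow_add hp0]
        congr 1; ring
      rw [e1, mul_comm]
      gcongr
      rw [← Real.rpow_natCast]
      apply Real.rpow_le_rpow_of_exponent_le hp1.le
      push_cast; exact hN0'
    have h2 : (B * (p : ℝ) ^ (D + 1)) ^ s ≤ A ^ s := by gcongr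
    have h3 : A ^ s ≤ (m : ℝ) ^ 2 * (p : ℝ) ^ (s * D + 1) * B ^ (s + 1) := by
      calc A ^ s = m * (p : ℝ) ^ (s * D + 1) * (((p : ℝ) ^ (s * D + 1))⁻¹ * (A ^ s / m)) := by field_simp
        _ ≤ m * (p : ℝ) ^ (s * D + 1) * (m * ‖q‖) := by gcongr
        _ ≤ m * (p : ℝ) ^ (s * D + 1) * (m * B ^ (s + 1)) := by gcongr
        _ = _ := by ring
    have h4 : (p : ℝ) ^ s ≤ (m : ℝ) ^ 2 * p * B := by
      have h5 : (B ^ s * (p : ℝ) ^ (s * D)) * (p : ℝ) ^ s ≤ (B ^ s * (p : ℝ) ^ (s * D)) * ((m : ℝ) ^ 2 * p * B) := by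
        calc _ = (B * (p : ℝ) ^ (D + 1)) ^ s := by rw [mul_pow, ← pow_mul]; ring
          _ ≤ _ := h2.trans h3
          _ = _ := by ring
      exact le_of_mul_le_mul_left h5 (by positivity)
    have h6 : (p : ℝ) ^ s2 ≤ (p : ℝ) ^ s := pow_le_pow_right₀ hp1.le (by omega)
    linarith
  exact Set.Finite.subset ((isCompact_closedBall _ _).finite_of_discrete) hbd

theorem sol_mono (p : ℕ) [Fact p.Prime] {m : ℕ} (y : Fin m → ℚ_[p]) (u u' : ℝ) (hu : 0 < u) (h : u ≤ u') :
    Sol p y u' ⊆ Sol p y u := by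
  intro q hq
  simp only [Sol, Set.mem_ofPred_eq] at hq ⊢
  rcases eq_or_ne q 0 with rfl | hq0
  · simp only [lf]; simp; positivity
  · exact hq.trans (Real.rpow_le_rpow_of_exponent_le (one_le_norm q hq0) (by linarith))

theorem oneD (p : ℕ) [Fact p.Prime] (ν : Measure ℤ_[p]) [IsFiniteMeasure ν]
    (hν : ∀ a b l, ν (pb p a l) = p * ν (pb p b (l + 1))) {m : ℕ} (hm : 0 < m)
    (c : Fin m → ℕ → ℚ_[p])
    (hc : ∀ i, Filter.Tendsto (c i) Filter.atTop (nhds 0)) (v : ℝ) (hv : 0 < v)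
    (h : ∀ u, v < u → (Sol p (crv p c 0) u).Finite) :
    ∀ᵐ x ∂ν, ∀ u, v < u → (Sol p (crv p c x) u).Finite := by
  have h1 : ∀ k : ℕ, ∀ᵐ x ∂ν, (Sol p (crv p c x) (v + 1 / ((k : ℝ) + 1))).Finite := by
    intro k
    have hk : 0 < 1 / ((k : ℝ) + 1) := by positivity
    exact oneD_aux p ν hν hm c hc (v + 1 / ((k : ℝ) + 1) / 2) _ (by linarith) (by linarith)
      (h _ (by linarith))
  rw [← ae_all_iff] at h1
  filter_upwards [h1] with x hx u hu
  obtain ⟨k, hk⟩ := exists_nat_one_div_lt (sub_pos.2 hu)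
  exact (hx k).subset (sol_mono p _ _ _ (by positivity) (by linarith))


theorem pb_eq_closedBall (p : ℕ) [Fact p.Prime] (a : ℤ_[p]) (l : ℕ) :
    pb p a l = Metric.closedBall a ((p : ℝ) ^ (-(l : ℤ))) := by
  ext x; simp [pb, dist_eq_norm]

theorem haar_pb (p : ℕ) [Fact p.Prime] (ν : Measure ℤ_[p]) [ν.IsAddHaarMeasure] (a b : ℤ_[p]) (l : ℕ) :
    ν (pb p a l) = p * ν (pb p b (l + 1)) := by
  have htr : ∀ (x y : ℤ_[p]) (k : ℕ), ν (pb p x k) = ν (pb p y k) := by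
    intro x y k
    have : pb p x k = (fun h => (y - x) + h) ⁻¹' (pb p y k) := by
      ext z; simp only [pb, Set.mem_preimage, Set.mem_ofPred_eq]
      rw [show y - x + z - y = z - x by ring]
    rw [this, measure_preimage_add]
  have hU : pb p a l = ⋃ i ∈ Finset.range p, pb p (a + i * p ^ l) (l + 1) := by
    apply Set.Subset.antisymm (pb_cover p a l)
    simp only [Set.iUnion_subset_iff]
    intro i _; exact pb_child p a l i
  rw [hU, measure_biUnion_finset]
  · rw [Finset.sum_congr rfl (fun i _ => htr _ b (l + 1))]; simp
  · intro i hi j hj hij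
    simp only [Finset.coe_range, Set.mem_Iio] at hi hj
    rw [Function.onFun, Set.disjoint_left]
    intro x hx hx'
    simp only [pb, Set.mem_ofPred_eq] at hx hx'
    rw [PadicInt.norm_le_pow_iff_mem_span_pow, Ideal.mem_span_singleton] at hx hx'
    have h1 := dvd_sub hx' hx
    have h2 : x - (a + j * (p:ℤ_[p]) ^ l) - (x - (a + i * (p:ℤ_[p]) ^ l)) = (p:ℤ_[p]) ^ l * (((i : ℤ) - j : ℤ) : ℤ_[p]) := by
      push_cast; ring
    rw [h2, pow_succ] at h1
    have hp0 : (p : ℤ_[p]) ^ l ≠ 0 := pow_ne_zero _ (by exact_mod_cast (Fact.out : p.Prime).ne_zero)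
    have h3 := (mul_dvd_mul_iff_left hp0).1 h1
    have h4 : ((p : ℤ)) ∣ (i : ℤ) - j := by
      have := (PadicInt.norm_int_lt_one_iff_dvd (p := p) ((i : ℤ) - j)).1
      apply this
      obtain ⟨z, hz⟩ := h3
      rw [hz, norm_mul, PadicInt.norm_p]
      have hp1 : (1 : ℝ) < p := by exact_mod_cast (Fact.out : p.Prime).one_lt
      calc _ ≤ (p : ℝ)⁻¹ * 1 := by gcongr; exact PadicInt.norm_le_one z
        _ < 1 := by rw [mul_one]; exact inv_lt_one_of_one_lt₀ hp1
    have h5 : (i : ℤ) - j = 0 := by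
      apply Int.eq_zero_of_abs_lt_dvd h4
      rw [abs_lt]; omega
    omega
  · intro i _
    rw [pb_eq_closedBall]; exact Metric.isClosed_closedBall.measurableSet

theorem supNormZ_eq {n : ℕ} (hn : 1 ≤ n) (q0 : ℤ) (q : Fin n → ℤ) :
    supNormZ q0 q = ‖(Fin.cons q0 q : Fin (n + 1) → ℤ)‖ := by
  have : Nonempty (Fin n) := ⟨⟨0, hn⟩⟩
  apply le_antisymm
  · apply max_le
    · simpa [Int.norm_eq_abs] using norm_le_pi_norm (Fin.cons q0 q : Fin (n + 1) → ℤ) 0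
    · apply ciSup_le
      intro i
      simpa [Int.norm_eq_abs] using norm_le_pi_norm (Fin.cons q0 q : Fin (n + 1) → ℤ) i.succ
  · have h0 : 0 ≤ supNormZ q0 q := (abs_nonneg _).trans (le_max_left _ _)
    rw [pi_norm_le_iff_of_nonneg h0]
    intro i
    refine Fin.cases ?_ (fun i => ?_) i
    · simp [Int.norm_eq_abs, supNormZ]
    · simp only [Fin.cons_succ, Int.norm_eq_abs, supNormZ]
      refine le_max_of_le_right ?_
      exact le_ciSup (f := fun i => |((q i : ℤ) : ℝ)|) (Set.finite_range _).bddAbove i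

theorem wExp_le_iff (p : ℕ) [Fact p.Prime] {n : ℕ} (hn : 1 ≤ n) (y : Fin n → ℚ_[p]) (v : ℝ) (hv : 0 < v) :
    wExp p y ≤ ENNReal.ofReal v ↔
      ∀ u, v < u → (Sol p (Fin.cons 1 y : Fin (n + 1) → ℚ_[p]) u).Finite := by
  let φ : ℤ × (Fin n → ℤ) → (Fin (n + 1) → ℤ) := fun qq => Fin.cons qq.1 qq.2
  have hφ : Function.Bijective φ := by
    constructor
    · rintro ⟨a, b⟩ ⟨a', b'⟩ h
      have := Fin.cons_injective2 h
      exact Prod.ext this.1 this.2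
    · intro q; exact ⟨(q 0, Fin.tail q), Fin.cons_self_tail q⟩
  have hset : ∀ u : ℝ, {qq : ℤ × (Fin n → ℤ) |
      ‖((qq.1 : ℚ_[p]) + ∑ i, (qq.2 i : ℚ_[p]) * y i)‖ ≤ (supNormZ qq.1 qq.2) ^ (-u)} =
      φ ⁻¹' (Sol p (Fin.cons 1 y : Fin (n + 1) → ℚ_[p]) u) := by
    intro u
    ext ⟨q0, q⟩
    simp only [Set.mem_preimage, Sol, Set.mem_ofPred_eq, φ, supNormZ_eq hn]
    rw [lf, Fin.sum_univ_succ]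
    simp
  have hinf : ∀ u : ℝ, {qq : ℤ × (Fin n → ℤ) |
      ‖((qq.1 : ℚ_[p]) + ∑ i, (qq.2 i : ℚ_[p]) * y i)‖ ≤ (supNormZ qq.1 qq.2) ^ (-u)}.Infinite ↔
      (Sol p (Fin.cons 1 y : Fin (n + 1) → ℚ_[p]) u).Infinite := by
    intro u
    rw [hset, ← Set.infinite_image_iff hφ.1.injOn, Set.image_preimage_eq _ hφ.2]
  constructor
  · intro h u hu
    by_contra hcon
    have h1 : ENNReal.ofReal u ≤ wExp p y := by
      rw [wExp]
      exact le_iSup₂_of_le u ⟨hv.trans hu, (hinf u).2 hcon⟩ le_rfl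
    have := (ENNReal.ofReal_le_ofReal_iff hv.le).1 (h1.trans h)
    linarith
  · intro h
    rw [wExp]
    refine iSup₂_le fun u hu => ENNReal.ofReal_le_ofReal ?_
    by_contra hcon
    push Not at hcon
    exact (hinf u).1 hu.2 (h u hcon)

theorem measurable_wExp_le (p : ℕ) [Fact p.Prime] {n : ℕ} (hn : 1 ≤ n) (v : ℝ) (hv : 0 < v) :
    MeasurableSet {y : Fin n → ℚ_[p] | wExp p y ≤ ENNReal.ofReal v} := by
  have e : {y : Fin n → ℚ_[p] | wExp p y ≤ ENNReal.ofReal v} =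
      ⋂ k : ℕ, ⋃ F : Finset (Fin (n + 1) → ℤ), ⋂ q : (Fin (n + 1) → ℤ),
        {y | q ∈ Sol p (Fin.cons 1 y : Fin (n + 1) → ℚ_[p]) (v + 1 / ((k : ℝ) + 1)) → q ∈ F} := by
    ext y
    simp only [Set.mem_ofPred_eq, Set.mem_iInter, Set.mem_iUnion]
    rw [wExp_le_iff p hn y v hv]
    constructor
    · intro h k
      have hk : 0 < 1 / ((k : ℝ) + 1) := by positivity
      have := h (v + 1 / ((k : ℝ) + 1)) (by linarith)
      exact ⟨this.toFinset, fun q hq => this.mem_toFinset.2 hq⟩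
    · intro h u hu
      obtain ⟨k, hk⟩ := exists_nat_one_div_lt (sub_pos.2 hu)
      obtain ⟨F, hF⟩ := h k
      exact (F.finite_toSet.subset (fun q hq => hF q hq)).subset
        (sol_mono p _ _ _ (by positivity) (by linarith))
  rw [e]
  refine MeasurableSet.iInter fun k => MeasurableSet.iUnion fun F => MeasurableSet.iInter fun q => ?_
  by_cases hq : q ∈ F
  · simp [hq]
  · have hm : MeasurableSet {y : Fin n → ℚ_[p] | q ∈ Sol p (Fin.cons 1 y : Fin (n + 1) → ℚ_[p]) (v + 1 / ((k : ℝ) + 1))} := by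
      apply IsClosed.measurableSet
      simp only [Sol, Set.mem_ofPred_eq]
      apply isClosed_le _ continuous_const
      apply Continuous.norm
      simp only [lf, Fin.sum_univ_succ, Fin.cons_zero, Fin.cons_succ]
      fun_prop
    have := hm.compl
    convert this using 1
    ext y; simp [hq]

theorem line (p : ℕ) [Fact p.Prime] (ν : Measure ℤ_[p]) [ν.IsAddHaarMeasure] {n d : ℕ} (hn : 1 ≤ n)
    (v : ℝ) (hv : 0 < v) (f : (Fin d → ℚ_[p]) → (Fin n → ℚ_[p])) (x0 : Fin d → ℚ_[p])
    (P : FormalMultilinearSeries ℚ_[p] (Fin d → ℚ_[p]) (Fin n → ℚ_[p])) (R : ℝ≥0∞)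
    (hf : HasFPowerSeriesOnBall f P x0 R) (hw : wExp p (f x0) ≤ ENNReal.ofReal v)
    (e : Fin d → ℚ_[p]) (he : e ∈ Metric.eball (0 : Fin d → ℚ_[p]) R) :
    ∀ᵐ t : ℤ_[p] ∂ν, wExp p (f (x0 + (t : ℚ_[p]) • e)) ≤ ENNReal.ofReal v := by
  let c : Fin (n + 1) → ℕ → ℚ_[p] :=
    Fin.cons (fun k => if k = 0 then 1 else 0) (fun i k => P k (fun _ => e) i)
  have hc : ∀ i, Filter.Tendsto (c i) Filter.atTop (nhds 0) := by
    intro i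
    refine Fin.cases ?_ (fun i => ?_) i
    · simp only [c, Fin.cons_zero]
      apply tendsto_const_nhds.congr'
      filter_upwards [Filter.eventually_gt_atTop 0] with k hk
      rw [if_neg hk.ne']
    · simp only [c, Fin.cons_succ]
      have h1 := (hf.hasSum he).summable.tendsto_atTop_zero
      exact (tendsto_pi_nhds.1 h1) i
  have hcrv : ∀ t : ℤ_[p], crv p c t = (Fin.cons 1 (f (x0 + (t : ℚ_[p]) • e)) : Fin (n + 1) → ℚ_[p]) := by
    intro t
    ext i
    refine Fin.cases ?_ (fun i => ?_) i
    · simp only [crv, ev, c, Fin.cons_zero]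
      rw [tsum_eq_single 0]
      · simp
      · intro k hk; simp [hk]
    · simp only [crv, ev, c, Fin.cons_succ]
      have hte : (t : ℚ_[p]) • e ∈ Metric.eball (0 : Fin d → ℚ_[p]) R := by
        rw [Metric.mem_eball, edist_zero_right] at he ⊢
        refine lt_of_le_of_lt ?_ he
        rw [enorm_smul]
        apply mul_le_of_le_one_left (by simp)
        rw [← ofReal_norm, ENNReal.ofReal_le_one]
        exact zp_norm_le p t
      have h1 := (Pi.hasSum.1 (hf.hasSum hte)) i
      rw [← h1.tsum_eq]
      apply tsum_congr
      intro k
      have := (P k).map_smul_univ (fun _ => (t : ℚ_[p])) (fun _ => e)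
      rw [this]
      simp [mul_comm]
  have h0 : ∀ u, v < u → (Sol p (crv p c 0) u).Finite := by
    rw [hcrv]
    simp only [PadicInt.coe_zero, zero_smul, add_zero]
    exact (wExp_le_iff p hn _ v hv).1 hw
  filter_upwards [oneD p ν (haar_pb p ν) (Nat.succ_pos n) c hc v hv h0] with t ht
  rw [wExp_le_iff p hn _ v hv, ← hcrv]
  exact ht

theorem ball_null (p : ℕ) [Fact p.Prime] {n d : ℕ} (hn : 1 ≤ n)
    (v : ℝ) (hv : 0 < v) (f : (Fin d → ℚ_[p]) → (Fin n → ℚ_[p])) (x0 : Fin d → ℚ_[p])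
    (P : FormalMultilinearSeries ℚ_[p] (Fin d → ℚ_[p]) (Fin n → ℚ_[p])) (R : ℝ≥0∞)
    (hf : HasFPowerSeriesOnBall f P x0 R) (hw : wExp p (f x0) ≤ ENNReal.ofReal v)
    (r : ℝ) (hr : ENNReal.ofReal r ≤ R)
    (μ : Measure (Fin d → ℚ_[p])) [μ.IsAddHaarMeasure] :
    ∀ᵐ x ∂μ, x ∈ ball x0 r → wExp p (f x) ≤ ENNReal.ofReal v := by
  let ν : Measure ℤ_[p] := Measure.addHaarMeasure ⊤
  have hbR : ∀ e : Fin d → ℚ_[p], e ∈ ball (0 : Fin d → ℚ_[p]) r → e ∈ Metric.eball (0 : Fin d → ℚ_[p]) R := by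
    intro e he
    rw [mem_ball_zero_iff] at he
    rw [Metric.mem_eball, edist_zero_right, ← ofReal_norm]
    refine lt_of_lt_of_le ?_ hr
    exact (ENNReal.ofReal_lt_ofReal_iff (lt_of_le_of_lt (norm_nonneg _) he)).2 he
  let g : (Fin d → ℚ_[p]) → (Fin n → ℚ_[p]) := fun e => f (x0 + e)
  have hg : ContinuousOn g (ball 0 r) := by
    have h1 : ContinuousOn f (Metric.eball x0 R) := hf.continuousOn
    refine h1.comp (by fun_prop) ?_
    intro e he
    have := hbR e he
    rw [Metric.mem_eball, edist_zero_right] at this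
    rw [Metric.mem_eball, edist_eq_enorm_sub]
    simpa using this
  let E : Set (Fin d → ℚ_[p]) := {e | e ∈ ball 0 r ∧ ¬ wExp p (g e) ≤ ENNReal.ofReal v}
  have hE : MeasurableSet E := by
    have h1 : MeasurableSet ((ball (0 : Fin d → ℚ_[p]) r).domRestrict g ⁻¹' {y | wExp p y ≤ ENNReal.ofReal v}ᶜ) :=
      (continuousOn_iff_continuous_domRestrict.1 hg).measurable (measurable_wExp_le p hn v hv).compl
    have h2 := (isOpen_ball (x := (0 : Fin d → ℚ_[p])) (ε := r)).measurableSet.subtype_image h1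
    convert h2 using 1
    ext e
    constructor
    · rintro ⟨h1, h2⟩; exact ⟨⟨e, h1⟩, h2, rfl⟩
    · rintro ⟨⟨e', h1⟩, h2, rfl⟩; exact ⟨h1, h2⟩
  have hae : ∀ᵐ e ∂μ, ∀ᵐ t : ℤ_[p] ∂ν, ¬ (e ∈ ball (0 : Fin d → ℚ_[p]) r ∧ (t : ℚ_[p]) • e ∈ E) := by
    refine Filter.Eventually.of_forall fun e => ?_
    by_cases he : e ∈ ball (0 : Fin d → ℚ_[p]) r
    · filter_upwards [line p ν hn v hv f x0 P R hf hw e (hbR e he)] with t ht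
      rintro ⟨-, h2⟩
      exact h2.2 ht
    · exact Filter.Eventually.of_forall fun t h => he h.1
  rw [Measure.ae_ae_comm] at hae
  swap
  · have hcont : Continuous fun z : (Fin d → ℚ_[p]) × ℤ_[p] => (z.2 : ℚ_[p]) • z.1 := by
      fun_prop
    exact ((measurable_fst (isOpen_ball.measurableSet)).inter (hcont.measurable hE)).compl
  have hunit : ν (ball 1 1) ≠ 0 := (isOpen_ball.measure_pos ν ⟨1, by simp⟩).ne'
  obtain ⟨t, ht1, ht⟩ : ∃ t ∈ ball (1 : ℤ_[p]) 1, ∀ᵐ e ∂μ, ¬ (e ∈ ball (0 : Fin d → ℚ_[p]) r ∧ (t : ℚ_[p]) • e ∈ E) := by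
    by_contra hcon
    push Not at hcon
    apply hunit
    refine measure_mono_null ?_ hae
    intro t ht h
    exact hcon t ht h
  have htn : ‖(t : ℚ_[p])‖ = 1 := by
    rw [mem_ball, dist_eq_norm] at ht1
    have h1 : t = (t - 1) + 1 := by ring
    rw [← PadicInt.norm_def, h1, IsUltrametricDist.norm_add_eq_max_of_norm_ne_norm]
    · rw [norm_one]; exact max_eq_right ht1.le
    · rw [norm_one]; exact ht1.ne
  have ht0 : (t : ℚ_[p]) ≠ 0 := by rw [← norm_pos_iff, htn]; exact one_pos
  let L : (Fin d → ℚ_[p]) ≃L[ℚ_[p]] (Fin d → ℚ_[p]) :=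
    ContinuousLinearEquiv.smulLeft (Units.mk0 (t : ℚ_[p]) ht0)⁻¹
  have hEnull : μ E = 0 := by
    have hL : (μ.map L).IsAddHaarMeasure := L.isAddHaarMeasure_map μ
    have hac : μ.map L ≪ μ := Measure.absolutelyContinuous_isAddHaarMeasure _ _
    let E' : Set (Fin d → ℚ_[p]) := {e | e ∈ ball (0 : Fin d → ℚ_[p]) r ∧ (t : ℚ_[p]) • e ∈ E}
    have hE' : MeasurableSet E' := by
      have hcont : Continuous fun e : (Fin d → ℚ_[p]) => (t : ℚ_[p]) • e := by fun_prop
      exact (isOpen_ball.measurableSet).inter (hcont.measurable hE)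
    have h0 : μ E' = 0 := by
      refine measure_mono_null ?_ ht
      intro e he h
      exact h he
    have h1 := hac h0
    rw [Measure.map_apply L.continuous.measurable hE'] at h1
    refine measure_mono_null ?_ h1
    intro e he
    have e1 : L e = (t : ℚ_[p])⁻¹ • e := rfl
    simp only [Set.mem_preimage, E', Set.mem_ofPred_eq]
    rw [e1, smul_smul, mul_inv_cancel₀ ht0, one_smul]
    refine ⟨?_, he⟩
    have := he.1
    rw [mem_ball_zero_iff] at this ⊢
    rwa [norm_smul, norm_inv, htn, inv_one, one_mul]
  have h2 := measure_preimage_add μ (-x0) E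
  rw [hEnull] at h2
  refine measure_mono_null ?_ h2
  intro x hx
  simp only [Set.mem_compl_iff, Set.mem_ofPred_eq] at hx
  push Not at hx
  simp only [Set.mem_preimage]
  refine ⟨?_, ?_⟩
  · rw [mem_ball_zero_iff]
    have := hx.1
    rw [mem_ball, dist_eq_norm] at this
    rwa [neg_add_eq_sub]
  · simp only [g, add_neg_cancel_left, not_le]
    exact hx.2


theorem chart_restrict (p : ℕ) [Fact p.Prime] {n d : ℕ} (M : Set (Fin n → ℚ_[p]))
    (U : Set (Fin d → ℚ_[p])) (f : (Fin d → ℚ_[p]) → (Fin n → ℚ_[p]))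
    (h : IsChart p d n M U f) (U' : Set (Fin d → ℚ_[p])) (hU' : IsOpen U') (hs : U' ⊆ U) :
    IsChart p d n M U' f := by
  obtain ⟨h1, h2, h3, h4, h5, W, hW, hMW⟩ := h
  refine ⟨hU', h2.mono hs, h3.mono hs, fun x hx => h4 x (hs hx), ?_, ?_⟩
  · intro x hx V hV hxV
    obtain ⟨W, hW, hxW, hsub⟩ := h5 x (hs hx) (V ∩ U') (hV.inter hU') ⟨hxV, hx⟩
    refine ⟨W, hW, hxW, ?_⟩
    intro y hy
    obtain ⟨z, hz, rfl⟩ := hsub ⟨hy.1, Set.image_mono hs hy.2⟩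
    exact ⟨z, hz.1, rfl⟩
  · choose! G hG1 hG2 hG3 using fun x (hx : x ∈ U') => h5 x (hs hx) U' hU' hx
    refine ⟨W ∩ ⋃ x ∈ U', G x, hW.inter (isOpen_biUnion hG1), ?_⟩
    ext y
    constructor
    · rintro ⟨hyM, hyW, hyG⟩
      obtain ⟨x, hx, hyx⟩ := Set.mem_iUnion₂.1 hyG
      have hyU : y ∈ f '' U := by rw [← hMW]; exact ⟨hyM, hyW⟩
      obtain ⟨z, hz, rfl⟩ := hG3 x hx ⟨hyx, hyU⟩
      exact ⟨z, hz.1, rfl⟩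
    · rintro ⟨x, hx, rfl⟩
      have : f x ∈ M ∩ W := by rw [hMW]; exact ⟨x, hs hx, rfl⟩
      exact ⟨this.1, this.2, Set.mem_iUnion₂.2 ⟨x, hx, hG2 x hx⟩⟩

/-- If `M ⊆ ℚ_p^n` is an analytic submanifold, `v ≥ n + 1` and
`w(y₀) ≤ v` for some `y₀ ∈ M`, then for almost every `y` in a neighbourhood of `y₀`
in `M` (w.r.t. the smooth measure class on `M`) one has `w(y) ≤ v`. -/
theorem statement0 (p : ℕ) [Fact p.Prime] (n d : ℕ) (hn : 1 ≤ n)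
    (M : Set (Fin n → ℚ_[p])) (hM : IsAnalyticSubmanifold p d n M)
    (v : ℝ) (hv : (n : ℝ) + 1 ≤ v)
    (y₀ : Fin n → ℚ_[p]) (hy₀ : y₀ ∈ M)
    (hw : wExp p y₀ ≤ ENNReal.ofReal v) :
    ∃ (U : Set (Fin d → ℚ_[p])) (f : (Fin d → ℚ_[p]) → (Fin n → ℚ_[p])),
      IsChart p d n M U f ∧ y₀ ∈ f '' U ∧
      ∀ (μ : Measure (Fin d → ℚ_[p])), μ.IsAddHaarMeasure →
        ∀ᵐ x ∂μ, x ∈ U → wExp p (f x) ≤ ENNReal.ofReal v := by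
  obtain ⟨U, f, hc, x0, hx0, rfl⟩ := hM.2 y₀ hy₀
  obtain ⟨P, R, hP⟩ := hc.2.1 x0 hx0
  obtain ⟨r1, hr1, hb⟩ := Metric.isOpen_iff.1 hc.1 x0 hx0
  obtain ⟨r2, hr2, hr2R⟩ : ∃ r2 : ℝ, 0 < r2 ∧ ENNReal.ofReal r2 ≤ R := by
    obtain ⟨r2, h1, h2⟩ := ENNReal.lt_iff_exists_nnreal_btwn.1 hP.r_pos
    exact ⟨r2, by exact_mod_cast h1, by rw [ENNReal.ofReal_coe_nnreal]; exact h2.le⟩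
  have hv0 : 0 < v := lt_of_lt_of_le (by positivity) hv
  refine ⟨ball x0 (min r1 r2), f, chart_restrict p M U f hc _ isOpen_ball
    ((ball_subset_ball (min_le_left _ _)).trans hb),
    ⟨x0, mem_ball_self (lt_min hr1 hr2), rfl⟩, ?_⟩
  intro μ hμ
  exact ball_null p hn v hv0 f x0 P R hP hw _
    ((ENNReal.ofReal_le_ofReal (min_le_right _ _)).trans hr2R) μ

end PadicDioph
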